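/- arXiv:2402.03249 — 2 statements merged into one kernel-verified Lean document; each statement's English description precedes it below -/
import Mathlib

section
/- For each n, let X ~ P_{β_1,Q^{CW}} and Y ~ P_{β_2,Q^{CW}} be independent Ising random vectors on {−1,1}^n with the Curie–Weiss interaction matrix Q^{CW} = (1/n)(11ᵀ − I_n), where β_1, β_2 ≥ 0. Then for every fixed t ∈ R, the moment generating function converges: lim_{n→∞} E[exp(t √n T_n)] = exp( t² (1−m(β_1)²)(1−m(β_2)²) / 2 ). -/
open MeasureTheory ProbabilityTheory Filter Topology Matrix

noncomputable section

/-- The `±1` configuration associated to a boolean configuration. -/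
def pmVec {ι : Type*} (s : ι → Bool) : ι → ℝ := fun i => if s i then 1 else -1

/-- Unnormalized Ising weight `exp((β/2) zᵀ Q z)`. -/
def isingWeight {ι : Type*} [Fintype ι] (β : ℝ) (Q : Matrix ι ι ℝ) (z : ι → ℝ) : ℝ :=
  Real.exp (β / 2 * (z ⬝ᵥ Q.mulVec z))

/-- Ising partition function `Z(β,Q)`. -/
def isingZ (ι : Type*) [Fintype ι] [DecidableEq ι] (β : ℝ) (Q : Matrix ι ι ℝ) : ℝ :=
  ∑ s : ι → Bool, isingWeight β Q (pmVec s)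

/-- The Ising probability measure `P_{β,Q}` on `{±1}^ι ⊆ ℝ^ι`:
`P(z) = exp((β/2) zᵀQz) / Z(β,Q)`. -/
def isingMeasure (ι : Type*) [Fintype ι] [DecidableEq ι] (β : ℝ) (Q : Matrix ι ι ℝ) :
    Measure (ι → ℝ) :=
  ∑ s : ι → Bool,
    ENNReal.ofReal (isingWeight β Q (pmVec s) / isingZ ι β Q) • Measure.dirac (pmVec s)

/-- Sample mean `X̄ = (1/n) Σ_i X_i`. -/
def sampleMean {ι : Type*} [Fintype ι] (x : ι → ℝ) : ℝ := (∑ i, x i) / (Fintype.card ι : ℝ)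

/-- Sample covariance `T_n = (1/n) Σ_i (X_i - X̄)(Y_i - Ȳ)`. -/
def sampleCov {ι : Type*} [Fintype ι] (x y : ι → ℝ) : ℝ :=
  (∑ i, (x i - sampleMean x) * (y i - sampleMean y)) / (Fintype.card ι : ℝ)

/-- Convergence in distribution: weak convergence of the laws, tested against
bounded continuous functions. -/
def TendstoInDistribution (μ : ℕ → Measure ℝ) (ν : Measure ℝ) : Prop :=
  ∀ f : BoundedContinuousFunction ℝ ℝ,
    Tendsto (fun n => ∫ x, f x ∂(μ n)) atTop (𝓝 (∫ x, f x ∂ν))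

/-- The Curie–Weiss interaction matrix `Q^{CW} = (1/n)(11ᵀ - I)`. -/
def QCW (n : ℕ) : Matrix (Fin n) (Fin n) ℝ := fun i j => if i = j then 0 else (n : ℝ)⁻¹

/-- `m(β)`: equal to `0` for `β ≤ 1`, and to the unique positive root of
`m = tanh(β m)` for `β > 1`. -/
def isingMag (β : ℝ) : ℝ := sSup {m : ℝ | 0 ≤ m ∧ m = Real.tanh (β * m)}

lemma cw_hasDerivAt_tanh (x : ℝ) : HasDerivAt Real.tanh (1 - Real.tanh x ^ 2) x := by
  have hc := (Real.cosh_pos x).ne'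
  have h := (Real.hasDerivAt_sinh x).div (Real.hasDerivAt_cosh x) hc
  have e : Real.tanh = Real.sinh / Real.cosh := by
    funext y; simp [Real.tanh_eq_sinh_div_cosh]
  rw [e]
  refine h.congr_deriv ?_
  simp only [Pi.div_apply]
  field_simp

lemma cw_hasDerivAt_logcosh (x : ℝ) :
    HasDerivAt (fun y => Real.log (Real.cosh y)) (Real.tanh x) x := by
  have hc := (Real.cosh_pos x).ne'
  have h := (Real.hasDerivAt_cosh x).log hc
  rwa [← Real.tanh_eq_sinh_div_cosh] at h

lemma cw_continuous_tanh : Continuous Real.tanh :=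
  continuous_iff_continuousAt.2 fun x => (cw_hasDerivAt_tanh x).continuousAt

lemma cw_continuous_logcosh : Continuous (fun y => Real.log (Real.cosh y)) :=
  continuous_iff_continuousAt.2 fun x => (cw_hasDerivAt_logcosh x).continuousAt

lemma cw_abs_tanh_le (x : ℝ) : |Real.tanh x| ≤ 1 := by
  have := Real.tanh_sq_lt_one x
  exact abs_le_one_iff_mul_self_le_one.2 (by nlinarith)

/-- mean value bound from zero -/
lemma cw_mvt {f f' : ℝ → ℝ} (hf : ∀ x, HasDerivAt f (f' x) x) (h0 : f 0 = 0)
    {a : ℝ} (ha : 0 ≤ a) (k : ℕ) (hb : ∀ x, |f' x| ≤ a * |x| ^ k) (x : ℝ) :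
    |f x| ≤ a * |x| ^ (k + 1) := by
  have h := (convex_uIcc (0:ℝ) x).norm_image_sub_le_of_norm_hasDerivWithin_le
    (f := f) (f' := f') (C := a * |x| ^ k) (x := 0) (y := x)
    (fun y _ => (hf y).hasDerivWithinAt)
    (fun y hy => by
      rw [Real.norm_eq_abs]
      refine (hb y).trans ?_
      have : |y| ≤ |x| := by
        have := Set.abs_sub_left_of_mem_uIcc hy
        simpa using this
      gcongr)
    Set.left_mem_uIcc Set.right_mem_uIcc
  rw [h0] at h
  simp only [sub_zero, Real.norm_eq_abs] at h
  calc |f x| ≤ _ := h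
    _ = _ := by ring

lemma cw_logcosh_taylor (θ d : ℝ) :
    |Real.log (Real.cosh (θ + d)) - Real.log (Real.cosh θ) - d * Real.tanh θ
      - d ^ 2 / 2 * (1 - Real.tanh θ ^ 2)| ≤ 2 * |d| ^ 3 := by
  have T (x : ℝ) : HasDerivAt (fun d => Real.tanh (θ + d)) (1 - Real.tanh (θ + x) ^ 2) x :=
    (cw_hasDerivAt_tanh (θ + x)).comp_const_add θ x
  have LC (x : ℝ) : HasDerivAt (fun d => Real.log (Real.cosh (θ + d))) (Real.tanh (θ + x)) x :=
    (cw_hasDerivAt_logcosh (θ + x)).comp_const_add θ x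
  have h2 : ∀ x, |(1 - Real.tanh (θ + x) ^ 2) - (1 - Real.tanh θ ^ 2)| ≤ 2 * |x| ^ 1 := by
    refine cw_mvt (f := fun x => (1 - Real.tanh (θ + x) ^ 2) - (1 - Real.tanh θ ^ 2))
      (f' := fun x => - (2 * Real.tanh (θ + x) * (1 - Real.tanh (θ + x) ^ 2)))
      (fun x => ?_) (by simp) (by norm_num) 0 (fun x => ?_)
    · have := (((T x).pow 2).const_sub 1).sub_const (1 - Real.tanh θ ^ 2)
      exact this.congr_deriv (by simp)
    · have h1 := cw_abs_tanh_le (θ + x)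
      have h3 : |1 - Real.tanh (θ + x) ^ 2| ≤ 1 := by
        rw [abs_le]; constructor <;> nlinarith [Real.tanh_sq_lt_one (θ + x), sq_nonneg (Real.tanh (θ+x))]
      rw [abs_neg, abs_mul, abs_mul]
      simp only [abs_two, pow_zero, mul_one]
      nlinarith [abs_nonneg (Real.tanh (θ + x)), abs_nonneg (1 - Real.tanh (θ + x) ^ 2)]
  have h1 : ∀ x, |Real.tanh (θ + x) - Real.tanh θ - x * (1 - Real.tanh θ ^ 2)| ≤ 2 * |x| ^ 2 := by
    refine cw_mvt (f := fun x => Real.tanh (θ + x) - Real.tanh θ - x * (1 - Real.tanh θ ^ 2))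
      (f' := fun x => (1 - Real.tanh (θ + x) ^ 2) - (1 - Real.tanh θ ^ 2))
      (fun x => ?_) (by simp) (by norm_num) 1 h2
    have := ((T x).sub_const (Real.tanh θ)).sub ((hasDerivAt_id x).mul_const (1 - Real.tanh θ ^ 2))
    exact this.congr_deriv (by simp)
  refine cw_mvt (f := fun d => Real.log (Real.cosh (θ + d)) - Real.log (Real.cosh θ) - d * Real.tanh θ
      - d ^ 2 / 2 * (1 - Real.tanh θ ^ 2))
      (f' := fun x => Real.tanh (θ + x) - Real.tanh θ - x * (1 - Real.tanh θ ^ 2))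
      (fun x => ?_) (by simp) (by norm_num) 2 h1 d
  have := (((LC x).sub_const (Real.log (Real.cosh θ))).sub ((hasDerivAt_id x).mul_const (Real.tanh θ))).sub
    ((((hasDerivAt_id x).pow 2).div_const 2).mul_const (1 - Real.tanh θ ^ 2))
  exact this.congr_deriv (by simp)

/-- The Curie–Weiss free energy functional. -/
def cwPhi (β θ : ℝ) : ℝ := Real.log (Real.cosh θ) - θ ^ 2 / (2 * β)

lemma cwPhi_continuous (β : ℝ) : Continuous (cwPhi β) := by
  unfold cwPhi
  have := cw_continuous_logcosh
  fun_prop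

lemma cwPhi_hasDerivAt (β θ : ℝ) : HasDerivAt (cwPhi β) (Real.tanh θ - θ / β) θ := by
  have := (cw_hasDerivAt_logcosh θ).sub (((hasDerivAt_id θ).pow 2).div_const (2 * β))
  unfold cwPhi
  refine this.congr_deriv ?_
  simp
  ring

lemma cwPhi_le {β : ℝ} (hβ : 0 < β) (θ : ℝ) : cwPhi β θ ≤ β - 1 / (4 * β) * θ ^ 2 := by
  have h1 : Real.log (Real.cosh θ) ≤ |θ| := by
    rw [Real.log_le_iff_le_exp (Real.cosh_pos θ), Real.cosh_eq]
    have h1 : Real.exp θ ≤ Real.exp |θ| := Real.exp_le_exp.2 (le_abs_self θ)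
    have h2 : Real.exp (-θ) ≤ Real.exp |θ| := Real.exp_le_exp.2 (neg_le_abs θ)
    linarith
  have h2 : |θ| ≤ θ ^ 2 / (4 * β) + β := by
    rw [← sub_nonneg]
    have : θ ^ 2 / (4 * β) + β - |θ| = (|θ| - 2 * β) ^ 2 / (4 * β) := by
      rw [← sq_abs θ]; field_simp; ring
    rw [this]; positivity
  unfold cwPhi
  have : θ ^ 2 / (2 * β) = θ ^ 2 / (4 * β) + 1 / (4 * β) * θ ^ 2 := by field_simp; ring
  linarith

lemma cwPhi_tendsto {β : ℝ} (hβ : 0 < β) : Tendsto (cwPhi β) (cocompact ℝ) atBot := by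
  refine tendsto_atBot_mono (cwPhi_le hβ) ?_
  have h : Tendsto (fun θ : ℝ => 1 / (4 * β) * θ ^ 2) (cocompact ℝ) atTop := by
    refine Tendsto.const_mul_atTop (by positivity) ?_
    have h1 := tendsto_norm_cocompact_atTop (E := ℝ)
    have := (tendsto_pow_atTop (two_ne_zero)).comp h1
    refine this.congr fun x => ?_
    simp
  simpa [sub_eq_add_neg] using tendsto_atBot_add_const_left _ β (tendsto_neg_atTop_atBot.comp h)

lemma cw_tanh_gt {β M : ℝ} (hβ : 0 < β) (hM : M = Real.tanh (β * M)) {s : ℝ} (hs0 : 0 < s)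
    (hs : s < β * M) : s / β < Real.tanh s := by
  have hconc : StrictConcaveOn ℝ (Set.Ici 0) Real.tanh := by
    refine StrictAntiOn.strictConcaveOn_of_deriv (convex_Ici 0) cw_continuous_tanh.continuousOn ?_
    have e : deriv Real.tanh = fun x => 1 - Real.tanh x ^ 2 :=
      funext fun x => (cw_hasDerivAt_tanh x).deriv
    rw [e, interior_Ici]
    have mono : StrictMono Real.tanh := strictMono_of_deriv_pos fun x => by
      rw [e]; have := Real.tanh_sq_lt_one x; linarith
    intro a ha b hb hab
    have h1 := mono hab
    have h0 := mono (show (0:ℝ) < a from ha)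
    rw [Real.tanh_zero] at h0
    simp only
    nlinarith
  have hT : 0 < β * M := hs0.trans hs
  have h := hconc.2 (show (0:ℝ) ∈ Set.Ici 0 by simp) (show β * M ∈ Set.Ici 0 from hT.le) hT.ne
    (show 0 < 1 - s / (β * M) by rw [sub_pos, div_lt_one hT]; exact hs)
    (show 0 < s / (β * M) by positivity) (by ring)
  simp only [smul_eq_mul, Real.tanh_zero, mul_zero, zero_add] at h
  rw [← hM] at h
  have hM0 : M ≠ 0 := fun h => by simp [h] at hT
  have e1 : s / (β * M) * M = s / β := by field_simp
  have e2 : s / (β * M) * (β * M) = s := by field_simp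
  rwa [e1, e2] at h

lemma cw_max_tanh_nonneg {β : ℝ} (hβ : 0 < β) {θ : ℝ} (hθ : 0 ≤ θ) (hmax : ∀ x, cwPhi β x ≤ cwPhi β θ) :
    Real.tanh θ = isingMag β := by
  have hcrit : Real.tanh θ - θ / β = 0 :=
    (IsLocalMax.hasDerivAt_eq_zero (Filter.Eventually.of_forall hmax) (cwPhi_hasDerivAt β θ))
  have ht : Real.tanh θ = θ / β := by linarith
  have hmem : θ / β ∈ {m : ℝ | 0 ≤ m ∧ m = Real.tanh (β * m)} := by
    refine ⟨by positivity, ?_⟩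
    rw [mul_div_cancel₀ _ hβ.ne', ht]
  have hub : ∀ M ∈ {m : ℝ | 0 ≤ m ∧ m = Real.tanh (β * m)}, M ≤ θ / β := by
    rintro M ⟨hM0, hM⟩
    by_contra hlt
    push Not at hlt
    rw [div_lt_iff₀' hβ] at hlt
    have hmono : StrictMonoOn (cwPhi β) (Set.Icc 0 (β * M)) := by
      refine strictMonoOn_of_deriv_pos (convex_Icc _ _) (cwPhi_continuous β).continuousOn ?_
      intro s hs
      rw [interior_Icc] at hs
      rw [(cwPhi_hasDerivAt β s).deriv]
      have := cw_tanh_gt hβ hM hs.1 hs.2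
      linarith
    have := hmono ⟨hθ, hlt.le⟩ ⟨hθ.trans hlt.le, le_rfl⟩ hlt
    exact absurd (hmax (β * M)) (not_le.2 this)
  rw [ht]
  exact (IsGreatest.csSup_eq ⟨hmem, hub⟩).symm

lemma cw_max_tanh {β : ℝ} (hβ : 0 < β) {θ : ℝ} (hmax : ∀ x, cwPhi β x ≤ cwPhi β θ) :
    Real.tanh θ ^ 2 = isingMag β ^ 2 := by
  rcases le_total 0 θ with h | h
  · rw [cw_max_tanh_nonneg hβ h hmax]
  · have e : cwPhi β (-θ) = cwPhi β θ := by simp [cwPhi]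
    have := cw_max_tanh_nonneg hβ (θ := -θ) (by linarith) (fun x => e ▸ hmax x)
    rw [Real.tanh_neg] at this
    rw [← this]; ring

lemma cw_gap {β : ℝ} (hβ : 0 < β) : ∃ θ₀, (∀ x, cwPhi β x ≤ cwPhi β θ₀) ∧
    ∀ ε > 0, ∃ δ > 0, ∀ θ, ε ≤ |Real.tanh θ ^ 2 - isingMag β ^ 2| → cwPhi β θ ≤ cwPhi β θ₀ - δ := by
  have hlim := cwPhi_tendsto hβ
  obtain ⟨θ₀, hθ₀⟩ := (cwPhi_continuous β).exists_forall_ge hlim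
  refine ⟨θ₀, hθ₀, fun ε hε => ?_⟩
  set A : Set ℝ := {θ | ε ≤ |Real.tanh θ ^ 2 - isingMag β ^ 2|} with hA
  have hAc : IsClosed A := by
    have := cw_continuous_tanh
    exact isClosed_le continuous_const (by fun_prop)
  rcases A.eq_empty_or_nonempty with h | ⟨a, ha⟩
  · refine ⟨1, one_pos, fun θ hθ => ?_⟩
    have : θ ∈ A := hθ
    simp [h] at this
  · obtain ⟨b, hb, hbmax⟩ := (cwPhi_continuous β).continuousOn.exists_isMaxOn' hAc ha
      ((hlim.eventually_le_atBot (cwPhi β a)).filter_mono inf_le_left)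
    refine ⟨cwPhi β θ₀ - cwPhi β b, ?_, fun θ hθ => ?_⟩
    · rw [gt_iff_lt, sub_pos]
      refine lt_of_le_of_ne (hθ₀ b) fun e => ?_
      have := cw_max_tanh hβ (θ := b) (fun x => e ▸ hθ₀ x)
      have hb' : ε ≤ |Real.tanh b ^ 2 - isingMag β ^ 2| := hb
      rw [this] at hb'
      simp at hb'
      linarith
    · have : cwPhi β θ ≤ cwPhi β b := hbmax hθ
      linarith

lemma cw_laplace {Φ h : ℝ → ℝ} (hΦ : Continuous Φ) (hh : Continuous h) (h0 : ∀ x, 0 ≤ h x)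
    (h1 : ∀ x, h x ≤ 1) (hIntPhi : Integrable (fun x => Real.exp (Φ x)))
    (θ₀ : ℝ) (hmax : ∀ x, Φ x ≤ Φ θ₀)
    (hgap : ∀ ε > 0, ∃ δ > 0, ∀ θ, ε ≤ h θ → Φ θ ≤ Φ θ₀ - δ) :
    Tendsto (fun n : ℕ => (∫ x, h x * Real.exp (n * Φ x)) / ∫ x, Real.exp (n * Φ x)) atTop (𝓝 0) := by
  set M := Φ θ₀ with hM
  have hIn : ∀ n : ℕ, 1 ≤ n → Integrable (fun x => Real.exp (n * Φ x)) := by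
    intro n hn
    have hn' : (1:ℝ) ≤ n := by exact_mod_cast hn
    refine (hIntPhi.const_mul (Real.exp ((n - 1) * M))).mono' (by fun_prop) (ae_of_all _ fun x => ?_)
    rw [Real.norm_eq_abs, abs_of_pos (Real.exp_pos _), ← Real.exp_add]
    apply Real.exp_le_exp.2
    nlinarith [hmax x]
  have hhIn : ∀ n : ℕ, 1 ≤ n → Integrable (fun x => h x * Real.exp (n * Φ x)) := by
    intro n hn
    refine (hIn n hn).mono' (by fun_prop) (ae_of_all _ fun x => ?_)
    rw [Real.norm_eq_abs, abs_of_nonneg (mul_nonneg (h0 x) (Real.exp_pos _).le)]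
    exact mul_le_of_le_one_left (Real.exp_pos _).le (h1 x)
  set I1 := ∫ x, Real.exp (Φ x) with hI1
  have hI1n : 0 ≤ I1 := integral_nonneg fun x => (Real.exp_pos _).le
  -- lower bound for the denominator
  have hden : ∀ δ > 0, ∃ v > 0, ∀ n : ℕ, 1 ≤ n →
      v * Real.exp (n * (M - δ)) ≤ ∫ x, Real.exp (n * Φ x) := by
    intro δ hδ
    have hnh : {x | M - δ < Φ x} ∈ 𝓝 θ₀ :=
      (isOpen_lt continuous_const hΦ).mem_nhds (by simp [hM, hδ])
    obtain ⟨r, hr, hball⟩ := Metric.mem_nhds_iff.1 hnh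
    refine ⟨2 * r, by positivity, fun n hn => ?_⟩
    have hs : ∫ x in Metric.ball θ₀ r, Real.exp (n * (M - δ)) = 2 * r * Real.exp (n * (M - δ)) := by
      rw [setIntegral_const, Measure.real, Real.volume_ball, ENNReal.toReal_ofReal (by positivity)]
      simp
    rw [← hs]
    refine (setIntegral_mono_on ?_ (hIn n hn).integrableOn measurableSet_ball ?_).trans
      (setIntegral_le_integral (hIn n hn) (ae_of_all _ fun x => (Real.exp_pos _).le))
    · exact integrableOn_const measure_ball_lt_top.ne
    · intro x hx
      have : M - δ < Φ x := hball hx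
      gcongr
  rw [Metric.tendsto_atTop']
  intro ε hε
  obtain ⟨δ, hδ, hg⟩ := hgap (ε / 2) (by positivity)
  obtain ⟨v, hv, hd⟩ := hden (δ / 2) (by positivity)
  have hlim : Tendsto (fun n : ℕ => Real.exp (δ - M) * I1 / v * Real.exp (-(δ / 2)) ^ n) atTop (𝓝 0) := by
    have := (tendsto_pow_atTop_nhds_zero_of_lt_one (Real.exp_pos (-(δ / 2))).le
      (by rw [Real.exp_lt_one_iff]; linarith)).const_mul (Real.exp (δ - M) * I1 / v)
    simpa using this
  have hev := hlim.eventually_lt_const (show (0:ℝ) < ε / 2 by positivity)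
  obtain ⟨N, hN⟩ := eventually_atTop.1 hev
  refine ⟨max N 1, fun n hn => ?_⟩
  have hnN : N ≤ n := (le_max_left _ _).trans hn.le
  have hn1 : 1 ≤ n := (le_max_right _ _).trans hn.le
  have hn' : (1:ℝ) ≤ n := by exact_mod_cast hn1
  have hpos : 0 < ∫ x, Real.exp (n * Φ x) := lt_of_lt_of_le (by positivity) (hd n hn1)
  have hnum : ∫ x, h x * Real.exp (n * Φ x) ≤
      ε / 2 * (∫ x, Real.exp (n * Φ x)) + Real.exp ((n - 1) * (M - δ)) * I1 := by
    rw [← integral_const_mul, ← integral_const_mul, ← integral_add]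
    · refine integral_mono (hhIn n hn1) (((hIn n hn1).const_mul _).add (hIntPhi.const_mul _)) fun x => ?_
      simp only
      by_cases hx : ε / 2 ≤ h x
      · have h2 := hg x hx
        have : Real.exp (n * Φ x) ≤ Real.exp ((n - 1) * (M - δ)) * Real.exp (Φ x) := by
          rw [← Real.exp_add]
          apply Real.exp_le_exp.2
          nlinarith
        have h3 : h x * Real.exp (n * Φ x) ≤ Real.exp (n * Φ x) :=
          mul_le_of_le_one_left (Real.exp_pos _).le (h1 x)
        have : 0 ≤ ε / 2 * Real.exp (n * Φ x) := by positivity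
        linarith
      · push Not at hx
        have : h x * Real.exp (n * Φ x) ≤ ε / 2 * Real.exp (n * Φ x) := by gcongr
        have : 0 ≤ Real.exp ((n - 1) * (M - δ)) * Real.exp (Φ x) := by positivity
        linarith
    · exact (hIn n hn1).const_mul _
    · exact hIntPhi.const_mul _
  rw [Real.dist_eq, sub_zero, abs_of_nonneg (div_nonneg (integral_nonneg fun x => mul_nonneg (h0 x) (Real.exp_pos _).le) hpos.le),
    div_lt_iff₀ hpos]
  refine lt_of_le_of_lt hnum ?_
  have h3 : Real.exp ((n - 1) * (M - δ)) * I1 =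
      Real.exp (δ - M) * I1 / v * Real.exp (-(δ / 2)) ^ n * (v * Real.exp (n * (M - δ / 2))) := by
    rw [← Real.exp_nat_mul]
    have : Real.exp ((n - 1) * (M - δ)) = Real.exp (δ - M) * Real.exp (n * -(δ/2)) * Real.exp (n * (M - δ / 2)) := by
      rw [← Real.exp_add, ← Real.exp_add]; congr 1; ring
    rw [this]; field_simp
  have h4 : Real.exp (δ - M) * I1 / v * Real.exp (-(δ / 2)) ^ n * (v * Real.exp (n * (M - δ / 2)))
      ≤ Real.exp (δ - M) * I1 / v * Real.exp (-(δ / 2)) ^ n * ∫ x, Real.exp (n * Φ x) := by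
    gcongr
    exact hd n hn1
  have h5 := mul_lt_mul_of_pos_right (hN n hnN) hpos
  rw [h3]
  linarith

/-- Mixing Gaussian for the Hubbard–Stratonovich representation. -/
def cwNu (β : ℝ) (n : ℕ) : Measure ℝ := gaussianReal 0 (Real.toNNReal (β / n))

instance (β : ℝ) (n : ℕ) : IsProbabilityMeasure (cwNu β n) := by
  unfold cwNu; infer_instance

/-- Tilting factor. -/
def cwG (n : ℕ) (θ : ℝ) : ℝ := (2 * Real.cosh θ) ^ n

lemma cwG_pos (n : ℕ) (θ : ℝ) : 0 < cwG n θ := by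
  have := Real.cosh_pos θ
  unfold cwG; positivity

lemma isingMag_zero : isingMag 0 = 0 := by
  have : {m : ℝ | 0 ≤ m ∧ m = Real.tanh (0 * m)} = {0} := by
    ext m; simp only [zero_mul, Real.tanh_zero, Set.mem_ofPred_eq, Set.mem_singleton_iff]
    constructor
    · exact fun h => h.2
    · rintro rfl; simp
  rw [isingMag, this, csSup_singleton]

lemma isingMag_sq_mem (β : ℝ) : 0 ≤ isingMag β ^ 2 ∧ isingMag β ^ 2 ≤ 1 := by
  refine ⟨sq_nonneg _, ?_⟩
  have h0 : 0 ≤ isingMag β := Real.sSup_nonneg fun x hx => hx.1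
  have h1 : isingMag β ≤ 1 := Real.sSup_le (fun x hx => by
    have := Real.tanh_lt_one (β * x); rw [hx.2]; exact this.le) zero_le_one
  nlinarith

/-- error functional -/
def cwD (β : ℝ) (n : ℕ) : ℝ :=
  (∫ θ, |Real.tanh θ ^ 2 - isingMag β ^ 2| * cwG n θ ∂(cwNu β n)) / ∫ θ, cwG n θ ∂(cwNu β n)

lemma cwD_tendsto {β : ℝ} (hβ : 0 ≤ β) : Tendsto (cwD β) atTop (𝓝 0) := by
  rcases hβ.eq_or_lt with h | hβ
  · subst h
    have : cwD 0 = fun _ => 0 := by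
      funext n
      simp [cwD, cwNu, isingMag_zero]
    rw [this]; exact tendsto_const_nhds
  obtain ⟨θ₀, hmax, hgap⟩ := cw_gap hβ
  have hm := isingMag_sq_mem β
  have ct := cw_continuous_tanh
  have hL := cw_laplace (Φ := cwPhi β) (h := fun θ => |Real.tanh θ ^ 2 - isingMag β ^ 2|)
    (cwPhi_continuous β) (by fun_prop) (fun x => abs_nonneg _)
    (fun x => by
      have h1 := Real.tanh_sq_lt_one x
      have h2 := sq_nonneg (Real.tanh x)
      rw [abs_le]; constructor <;> linarith) ?_ θ₀ hmax hgap
  · refine hL.congr' ?_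
    filter_upwards [eventually_ge_atTop 1] with n hn
    have hn' : (0:ℝ) < n := by exact_mod_cast hn
    have hv : Real.toNNReal (β / n) ≠ 0 := by
      rw [Ne, Real.toNNReal_eq_zero, not_le]; positivity
    have hvc : ((Real.toNNReal (β / n) : NNReal) : ℝ) = β / n := Real.coe_toNNReal _ (by positivity)
    have key : ∀ θ, gaussianPDFReal 0 (Real.toNNReal (β / n)) θ * cwG n θ =
        ((√(2 * Real.pi * (β / n)))⁻¹ * 2 ^ n) * Real.exp (n * cwPhi β θ) := by
      intro θ
      rw [gaussianPDFReal, hvc, cwG, cwPhi, mul_pow, mul_sub, sub_eq_add_neg (_ * _), Real.exp_add,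
        Real.exp_nat_mul, Real.exp_log (Real.cosh_pos θ)]
      have : -(θ - 0) ^ 2 / (2 * (β / n)) = -(n * (θ ^ 2 / (2 * β))) := by
        field_simp; ring
      rw [this]; ring
    have hc : ((√(2 * Real.pi * (β / n)))⁻¹ * 2 ^ n) ≠ 0 := by positivity
    unfold cwD cwNu
    rw [integral_gaussianReal_eq_integral_smul hv, integral_gaussianReal_eq_integral_smul hv]
    simp only [smul_eq_mul]
    simp_rw [mul_left_comm _ (abs _), key, mul_left_comm (abs _) _ (Real.exp _)]
    rw [integral_const_mul, integral_const_mul, mul_div_mul_left _ _ hc]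
  · have hg := (integrable_exp_neg_mul_sq (b := 1 / (4 * β)) (by positivity)).const_mul (Real.exp β)
    refine hg.mono' (((cwPhi_continuous β).rexp).aestronglyMeasurable) (ae_of_all _ fun x => ?_)
    rw [Real.norm_eq_abs, abs_of_pos (Real.exp_pos _), ← Real.exp_add]
    apply Real.exp_le_exp.2
    have := cwPhi_le hβ x
    linarith

lemma cw_pm_sq {ι : Type*} (s : ι → Bool) (i : ι) : pmVec s i ^ 2 = 1 := by
  unfold pmVec; split_ifs <;> norm_num

lemma cw_sum_exp {n : ℕ} (a : Fin n → ℝ) :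
    ∑ s : Fin n → Bool, Real.exp (∑ i, a i * pmVec s i) = ∏ i, (2 * Real.cosh (a i)) := by
  have h : ∀ i, 2 * Real.cosh (a i) = ∑ b : Bool, Real.exp (a i * if b then 1 else -1) := by
    intro i; rw [Real.cosh_eq]; simp; ring
  simp_rw [h]
  rw [Fintype.prod_sum]
  refine Finset.sum_congr rfl fun s _ => ?_
  rw [Real.exp_sum]
  rfl

lemma cw_sum_exp_const (n : ℕ) (θ : ℝ) :
    ∑ s : Fin n → Bool, Real.exp (θ * ∑ i, pmVec s i) = cwG n θ := by
  have := cw_sum_exp (n := n) (fun _ => θ)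
  simp only [← Finset.mul_sum, Finset.prod_const, Finset.card_univ, Fintype.card_fin] at this
  exact this

lemma cw_quad {n : ℕ} (s : Fin n → Bool) (hn : 1 ≤ n) :
    pmVec s ⬝ᵥ (QCW n).mulVec (pmVec s) = (∑ i, pmVec s i) ^ 2 / n - 1 := by
  have hn' : (n:ℝ) ≠ 0 := by positivity
  have h : ∀ i, (QCW n).mulVec (pmVec s) i = (n:ℝ)⁻¹ * ((∑ j, pmVec s j) - pmVec s i) := by
    intro i
    simp only [mulVec, dotProduct, QCW]
    rw [mul_sub, Finset.mul_sum, eq_sub_iff_add_eq]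
    have : (n:ℝ)⁻¹ * pmVec s i = ∑ j, if i = j then (n:ℝ)⁻¹ * pmVec s j else 0 := by simp
    rw [this, ← Finset.sum_add_distrib]
    refine Finset.sum_congr rfl fun j _ => ?_
    split_ifs <;> simp
  simp only [dotProduct, h]
  have e : ∀ i, pmVec s i * ((n:ℝ)⁻¹ * ((∑ j, pmVec s j) - pmVec s i))
      = (n:ℝ)⁻¹ * (∑ j, pmVec s j) * pmVec s i - (n:ℝ)⁻¹ := by
    intro i
    have := cw_pm_sq s i
    linear_combination (-(n:ℝ)⁻¹) * this
  simp only [e]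
  rw [Finset.sum_sub_distrib, ← Finset.mul_sum]
  simp
  field_simp

lemma cw_integrable_exp (β : ℝ) (n : ℕ) (a : ℝ) :
    Integrable (fun θ => Real.exp (θ * a)) (cwNu β n) := by
  have := integrable_exp_mul_gaussianReal (μ := 0) (v := Real.toNNReal (β / n)) a
  simpa [cwNu, mul_comm] using this

lemma cw_weight {β : ℝ} (hβ : 0 ≤ β) {n : ℕ} (hn : 1 ≤ n) (s : Fin n → Bool) :
    isingWeight β (QCW n) (pmVec s) =
      Real.exp (-β / 2) * ∫ θ, Real.exp (θ * ∑ i, pmVec s i) ∂(cwNu β n) := by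
  have hm : ∀ a : ℝ, ∫ θ, Real.exp (θ * a) ∂(cwNu β n) = Real.exp (β / n * a ^ 2 / 2) := by
    intro a
    have := mgf_gaussianReal (p := cwNu β n) (X := id) (μ := 0) (v := Real.toNNReal (β / n))
      (by simp [cwNu]) a
    rw [Real.coe_toNNReal _ (by positivity)] at this
    simpa [mgf, mul_comm] using this
  rw [hm, isingWeight, cw_quad s hn, ← Real.exp_add]
  congr 1; ring

lemma cw_integrable_G (β : ℝ) (n : ℕ) : Integrable (cwG n) (cwNu β n) := by
  have : cwG n = fun θ => ∑ s : Fin n → Bool, Real.exp (θ * ∑ i, pmVec s i) := by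
    funext θ; rw [cw_sum_exp_const]
  rw [this]
  exact integrable_finsetSum _ fun s _ => cw_integrable_exp β n _

lemma cw_integrable_DG (β : ℝ) (n : ℕ) :
    Integrable (fun θ => |Real.tanh θ ^ 2 - isingMag β ^ 2| * cwG n θ) (cwNu β n) := by
  have ct := cw_continuous_tanh
  have hm := isingMag_sq_mem β
  refine (cw_integrable_G β n).mono' ?_ (ae_of_all _ fun x => ?_)
  · have : Continuous (cwG n) := by unfold cwG; fun_prop
    exact (by fun_prop : Continuous _).aestronglyMeasurable
  · rw [Real.norm_eq_abs, abs_mul, abs_abs, abs_of_pos (cwG_pos n x)]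
    refine mul_le_of_le_one_left (cwG_pos n x).le ?_
    have h1 := Real.tanh_sq_lt_one x
    have h2 := sq_nonneg (Real.tanh x)
    rw [abs_le]; constructor <;> linarith

lemma cw_intG_pos (β : ℝ) (n : ℕ) : 0 < ∫ θ, cwG n θ ∂(cwNu β n) := by
  rw [integral_pos_iff_support_of_nonneg (fun x => (cwG_pos n x).le) (cw_integrable_G β n)]
  have : Function.support (cwG n) = Set.univ := by
    ext x; simp [(cwG_pos n x).ne']
  rw [this]; simp

/-- General Hubbard–Stratonovich identity. -/
lemma cw_HS {β : ℝ} (hβ : 0 ≤ β) {n : ℕ} (hn : 1 ≤ n) (f : (Fin n → Bool) → ℝ) :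
    Integrable (fun θ => ∑ s, f s * Real.exp (θ * ∑ i, pmVec s i)) (cwNu β n) ∧
    ∑ s, isingWeight β (QCW n) (pmVec s) * f s =
      Real.exp (-β / 2) * ∫ θ, ∑ s, f s * Real.exp (θ * ∑ i, pmVec s i) ∂(cwNu β n) := by
  have hi : ∀ s ∈ (Finset.univ : Finset (Fin n → Bool)),
      Integrable (fun θ => f s * Real.exp (θ * ∑ i, pmVec s i)) (cwNu β n) :=
    fun s _ => (cw_integrable_exp β n _).const_mul _
  refine ⟨integrable_finsetSum _ hi, ?_⟩
  rw [integral_finsetSum _ hi, Finset.mul_sum]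
  refine Finset.sum_congr rfl fun s _ => ?_
  rw [cw_weight hβ hn, integral_const_mul]; ring

lemma cw_Z {β : ℝ} (hβ : 0 ≤ β) {n : ℕ} (hn : 1 ≤ n) :
    isingZ (Fin n) β (QCW n) = Real.exp (-β / 2) * ∫ θ, cwG n θ ∂(cwNu β n) := by
  have := (cw_HS hβ hn (fun _ => 1)).2
  simpa [cw_sum_exp_const, isingZ] using this

/-- Transfer of pointwise bounds. -/
lemma cw_transfer {β : ℝ} (hβ : 0 ≤ β) {n : ℕ} (hn : 1 ≤ n) (f : (Fin n → Bool) → ℝ)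
    (E0 a b : ℝ)
    (hb : ∀ θ, |(∑ s, f s * Real.exp (θ * ∑ i, pmVec s i)) - E0 * cwG n θ| ≤
      (a + b * |Real.tanh θ ^ 2 - isingMag β ^ 2|) * cwG n θ) :
    |(∑ s, isingWeight β (QCW n) (pmVec s) / isingZ (Fin n) β (QCW n) * f s) - E0| ≤
      a + b * cwD β n := by
  obtain ⟨hi, he⟩ := cw_HS hβ hn f
  have hG := cw_integrable_G β n
  have hDG := cw_integrable_DG β n
  have hpos := cw_intG_pos β n
  have e1 : (∑ s, isingWeight β (QCW n) (pmVec s) / isingZ (Fin n) β (QCW n) * f s) =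
      (∫ θ, ∑ s, f s * Real.exp (θ * ∑ i, pmVec s i) ∂(cwNu β n)) / ∫ θ, cwG n θ ∂(cwNu β n) := by
    rw [← mul_div_mul_left _ _ (Real.exp_pos (-β / 2)).ne', ← he, ← cw_Z hβ hn, Finset.sum_div]
    refine Finset.sum_congr rfl fun s _ => by ring
  have e2 : (∑ s, isingWeight β (QCW n) (pmVec s) / isingZ (Fin n) β (QCW n) * f s) - E0 =
      (∫ θ, (∑ s, f s * Real.exp (θ * ∑ i, pmVec s i)) - E0 * cwG n θ ∂(cwNu β n)) /
        ∫ θ, cwG n θ ∂(cwNu β n) := by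
    rw [e1, integral_sub hi (hG.const_mul E0), integral_const_mul]
    field_simp
  rw [e2, abs_div, abs_of_pos hpos, div_le_iff₀ hpos]
  refine abs_integral_le_integral_abs.trans ?_
  refine (integral_mono (hi.sub (hG.const_mul E0)).abs
    (g := fun θ => a * cwG n θ + b * (|Real.tanh θ ^ 2 - isingMag β ^ 2| * cwG n θ))
    ((hG.const_mul a).add (hDG.const_mul b)) (fun θ => ?_)).trans ?_
  · refine (hb θ).trans (le_of_eq ?_); ring
  · rw [integral_add (hG.const_mul a) (hDG.const_mul b), integral_const_mul, integral_const_mul, cwD]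
    apply le_of_eq; field_simp

lemma cw_G_deriv (n : ℕ) (θ : ℝ) : HasDerivAt (cwG n) (n * cwG n θ * Real.tanh θ) θ := by
  have h := ((Real.hasDerivAt_cosh θ).const_mul 2).pow n
  refine HasDerivAt.congr_deriv (f := cwG n) h ?_
  have hc := (Real.cosh_pos θ).ne'
  unfold cwG
  rw [Real.tanh_eq_sinh_div_cosh]
  cases n with
  | zero => simp
  | succ k => simp only [Nat.add_sub_cancel]; field_simp; ring

lemma cw_variance (n : ℕ) (θ : ℝ) :
    ∑ s : Fin n → Bool, ((∑ i, pmVec s i) - n * Real.tanh θ) ^ 2 * Real.exp (θ * ∑ i, pmVec s i)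
      = n * (1 - Real.tanh θ ^ 2) * cwG n θ := by
  have hd : ∀ a x : ℝ, HasDerivAt (fun θ => Real.exp (θ * a)) (a * Real.exp (x * a)) x := by
    intro a x
    have := ((hasDerivAt_id x).mul_const a).exp
    exact this.congr_deriv (by simp; ring)
  have A1 : ∀ x : ℝ, ∑ s : Fin n → Bool, (∑ i, pmVec s i) * Real.exp (x * ∑ i, pmVec s i)
      = n * cwG n x * Real.tanh x := by
    intro x
    have h1 : HasDerivAt (cwG n)
        (∑ s : Fin n → Bool, (∑ i, pmVec s i) * Real.exp (x * ∑ i, pmVec s i)) x := by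
      have e : cwG n = fun θ => ∑ s : Fin n → Bool, Real.exp (θ * ∑ i, pmVec s i) := by
        funext θ; rw [cw_sum_exp_const]
      rw [e]
      exact HasDerivAt.fun_sum fun s _ => hd _ x
    exact h1.unique (cw_G_deriv n x)
  have A2 : ∑ s : Fin n → Bool, (∑ i, pmVec s i) ^ 2 * Real.exp (θ * ∑ i, pmVec s i)
      = n * (n * cwG n θ * Real.tanh θ) * Real.tanh θ + n * cwG n θ * (1 - Real.tanh θ ^ 2) := by
    have h1 : HasDerivAt (fun x => n * cwG n x * Real.tanh x)
        (∑ s : Fin n → Bool, (∑ i, pmVec s i) ^ 2 * Real.exp (θ * ∑ i, pmVec s i)) θ := by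
      have e : (fun x => n * cwG n x * Real.tanh x) =
          fun θ => ∑ s : Fin n → Bool, (∑ i, pmVec s i) * Real.exp (θ * ∑ i, pmVec s i) := by
        funext x; rw [A1]
      rw [e]
      refine HasDerivAt.fun_sum fun s _ => ?_
      exact ((hd _ θ).const_mul _).congr_deriv (by ring)
    exact h1.unique (((cw_G_deriv n θ).const_mul (n:ℝ)).mul (cw_hasDerivAt_tanh θ))
  have e : ∀ s : Fin n → Bool,
      ((∑ i, pmVec s i) - n * Real.tanh θ) ^ 2 * Real.exp (θ * ∑ i, pmVec s i) =
      (∑ i, pmVec s i) ^ 2 * Real.exp (θ * ∑ i, pmVec s i)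
      - 2 * (n * Real.tanh θ) * ((∑ i, pmVec s i) * Real.exp (θ * ∑ i, pmVec s i))
      + (n * Real.tanh θ) ^ 2 * Real.exp (θ * ∑ i, pmVec s i) := fun s => by ring
  simp only [e, Finset.sum_add_distrib, Finset.sum_sub_distrib, ← Finset.mul_sum]
  rw [A2, A1, cw_sum_exp_const]
  ring

lemma cw_abs_mean_le {n : ℕ} (s : Fin n → Bool) : |sampleMean (pmVec s)| ≤ 1 := by
  unfold sampleMean
  rw [abs_div, Fintype.card_fin, Nat.abs_cast]
  refine div_le_one_of_le₀ ?_ (by positivity)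
  refine (Finset.abs_sum_le_sum_abs _ _).trans ?_
  have : ∀ i, |pmVec s i| = 1 := by intro i; unfold pmVec; split_ifs <;> simp
  simp [this]

lemma cw_meanX {β : ℝ} (hβ : 0 ≤ β) {n : ℕ} (hn : 1 ≤ n) :
    ∑ s : Fin n → Bool, isingWeight β (QCW n) (pmVec s) / isingZ (Fin n) β (QCW n) *
      |sampleMean (pmVec s) ^ 2 - isingMag β ^ 2| ≤ 2 / √n + cwD β n := by
  have hn0 : (0:ℝ) < n := by exact_mod_cast hn
  have hsq : 0 < √(n:ℝ) := Real.sqrt_pos.2 hn0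
  have hss : √(n:ℝ) ^ 2 = n := Real.sq_sqrt hn0.le
  have h := cw_transfer hβ hn (fun s => |sampleMean (pmVec s) ^ 2 - isingMag β ^ 2|) 0 (2 / √n) 1 ?_
  · rw [sub_zero, one_mul] at h
    exact (le_abs_self _).trans h
  intro θ
  rw [zero_mul, sub_zero, abs_of_nonneg (Finset.sum_nonneg fun s _ =>
    mul_nonneg (abs_nonneg _) (Real.exp_pos _).le), one_mul]
  set τ := Real.tanh θ with hτ
  have hτ1 : |τ| ≤ 1 := cw_abs_tanh_le θ
  have hpt : ∀ s : Fin n → Bool, |sampleMean (pmVec s) ^ 2 - isingMag β ^ 2| ≤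
      (1 / √n + |τ ^ 2 - isingMag β ^ 2|) + √n / n ^ 2 * ((∑ i, pmVec s i) - n * τ) ^ 2 := by
    intro s
    have hu := cw_abs_mean_le s
    set u := sampleMean (pmVec s) with hu'
    have hS : (∑ i, pmVec s i) = n * u := by
      rw [hu', sampleMean, Fintype.card_fin]; field_simp
    have h1 : |u ^ 2 - τ ^ 2| ≤ 2 * |u - τ| := by
      have : u ^ 2 - τ ^ 2 = (u + τ) * (u - τ) := by ring
      rw [this, abs_mul]
      have := abs_add_le u τ
      gcongr; linarith
    have h2 : 2 * |u - τ| ≤ 1 / √n + √n * (u - τ) ^ 2 := by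
      rw [← sq_abs (u - τ), ← sub_nonneg]
      have : 1 / √n + √n * |u - τ| ^ 2 - 2 * |u - τ| = (√n * |u - τ| - 1) ^ 2 / √n := by
        field_simp; ring
      rw [this]; positivity
    have h3 : √n / n ^ 2 * (n * u - n * τ) ^ 2 = √n * (u - τ) ^ 2 := by field_simp
    rw [hS, h3]
    have h4 := abs_sub_le (u ^ 2) (τ ^ 2) (isingMag β ^ 2)
    linarith
  calc ∑ s : Fin n → Bool, |sampleMean (pmVec s) ^ 2 - isingMag β ^ 2| * Real.exp (θ * ∑ i, pmVec s i)
      ≤ ∑ s : Fin n → Bool, ((1 / √n + |τ ^ 2 - isingMag β ^ 2|) * Real.exp (θ * ∑ i, pmVec s i)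
        + √n / n ^ 2 * (((∑ i, pmVec s i) - n * τ) ^ 2 * Real.exp (θ * ∑ i, pmVec s i))) := by
        refine Finset.sum_le_sum fun s _ => ?_
        rw [← mul_assoc, ← add_mul]
        exact mul_le_mul_of_nonneg_right (hpt s) (Real.exp_pos _).le
    _ = (1 / √n + |τ ^ 2 - isingMag β ^ 2|) * cwG n θ + √n / n ^ 2 * (n * (1 - τ ^ 2) * cwG n θ) := by
        rw [Finset.sum_add_distrib, ← Finset.mul_sum, ← Finset.mul_sum, cw_sum_exp_const, cw_variance]
    _ ≤ (1 / √n + |τ ^ 2 - isingMag β ^ 2|) * cwG n θ + √n / n ^ 2 * (n * 1 * cwG n θ) := by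
        have := (cwG_pos n θ).le
        have := sq_nonneg τ
        gcongr
        linarith
    _ = _ := by
        have : √n / n ^ 2 * (n * 1 * cwG n θ) = 1 / √n * cwG n θ := by
          field_simp; rw [hss]
        rw [this]; ring

lemma cw_exp_lip {p q K : ℝ} (hp : p ≤ K) (hq : q ≤ K) :
    |Real.exp p - Real.exp q| ≤ Real.exp K * |p - q| := by
  wlog h : q ≤ p generalizing p q
  · rw [abs_sub_comm, abs_sub_comm p q]
    exact this hq hp (le_of_not_ge h)
  rw [abs_of_nonneg (sub_nonneg.2 (Real.exp_le_exp.2 h)), abs_of_nonneg (sub_nonneg.2 h)]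
  have h1 : Real.exp q = Real.exp p * Real.exp (q - p) := by rw [← Real.exp_add]; congr 1; ring
  have h2 := Real.add_one_le_exp (q - p)
  have h3 : Real.exp p ≤ Real.exp K := Real.exp_le_exp.2 hp
  have h4 := Real.exp_pos p
  rw [h1]
  nlinarith

lemma cw_cov {n : ℕ} (hn : 1 ≤ n) (t : ℝ) (x y : Fin n → ℝ) :
    t * (√n * sampleCov x y) = ∑ i, t / √n * (x i - sampleMean x) * y i := by
  have hn0 : (0:ℝ) < n := by exact_mod_cast hn
  have hss : √(n:ℝ) ^ 2 = n := Real.sq_sqrt hn0.le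
  have hsq : 0 < √(n:ℝ) := Real.sqrt_pos.2 hn0
  have h0 : ∑ i, (x i - sampleMean x) = 0 := by
    simp only [Finset.sum_sub_distrib, sampleMean, Finset.sum_const, Finset.card_univ, Fintype.card_fin, nsmul_eq_mul]
    field_simp; simp
  have h1 : ∑ i, (x i - sampleMean x) * (y i - sampleMean y) = ∑ i, (x i - sampleMean x) * y i := by
    simp only [mul_sub (_ - _), Finset.sum_sub_distrib, ← Finset.sum_mul, h0]; simp
  simp only [sampleCov, h1, mul_assoc, ← Finset.mul_sum, Fintype.card_fin]
  field_simp
  rw [hss]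
  ring

lemma cw_meanY {β : ℝ} (hβ : 0 ≤ β) {n : ℕ} (hn : 1 ≤ n) (t : ℝ) (x : Fin n → Bool) :
    |(∑ s : Fin n → Bool, isingWeight β (QCW n) (pmVec s) / isingZ (Fin n) β (QCW n) *
      Real.exp (t * (√n * sampleCov (pmVec x) (pmVec s)))) -
      Real.exp (t ^ 2 / 2 * (1 - sampleMean (pmVec x) ^ 2) * (1 - isingMag β ^ 2))| ≤
      Real.exp (t ^ 2 / 2) * (Real.exp (16 * |t| ^ 3 / √n) - 1)
        + Real.exp (t ^ 2 / 2) * (t ^ 2 / 2) * cwD β n := by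
  have hn0 : (0:ℝ) < n := by exact_mod_cast hn
  have hsq : 0 < √(n:ℝ) := Real.sqrt_pos.2 hn0
  have hss : √(n:ℝ) ^ 2 = n := Real.sq_sqrt hn0.le
  have hm := isingMag_sq_mem β
  refine cw_transfer hβ hn _ _ _ _ fun θ => ?_
  have hu := cw_abs_mean_le x
  set u := sampleMean (pmVec x) with hu'
  have hu2 : u ^ 2 ≤ 1 := by rw [← sq_abs]; nlinarith [abs_nonneg u]
  have hu0 := sq_nonneg u
  set c : Fin n → ℝ := fun i => pmVec x i - u with hc
  have hS : (∑ i, pmVec x i) = n * u := by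
    rw [hu', sampleMean, Fintype.card_fin]; field_simp
  have hc1 : ∑ i, c i = 0 := by
    simp [hc, Finset.sum_sub_distrib, hS]
  have hc2 : ∑ i, c i ^ 2 = n * (1 - u ^ 2) := by
    have : ∀ i, c i ^ 2 = 1 + u ^ 2 - 2 * u * pmVec x i := by
      intro i; have := cw_pm_sq x i; simp only [hc]; linear_combination this
    simp only [this, Finset.sum_sub_distrib, ← Finset.mul_sum, hS]
    simp; ring
  have hcb : ∀ i, |c i| ≤ 2 := by
    intro i
    have h1 : |pmVec x i| ≤ 1 := by unfold pmVec; split_ifs <;> simp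
    have := abs_sub (pmVec x i) u
    simp only [hc]; linarith
  set τ := Real.tanh θ with hτ
  have hτ1 := (Real.tanh_sq_lt_one θ).le
  have hτ0 := sq_nonneg τ
  rw [← hτ] at hτ1
  have e1 : ∑ s : Fin n → Bool, Real.exp (t * (√n * sampleCov (pmVec x) (pmVec s))) *
      Real.exp (θ * ∑ i, pmVec s i) = ∏ i, (2 * Real.cosh (θ + t / √n * c i)) := by
    rw [← cw_sum_exp]
    refine Finset.sum_congr rfl fun s _ => ?_
    rw [cw_cov hn, ← Real.exp_add, Finset.mul_sum, ← Finset.sum_add_distrib]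
    congr 1
    refine Finset.sum_congr rfl fun i _ => ?_
    simp only [hc]; ring
  set p := t ^ 2 / 2 * (1 - u ^ 2) * (1 - τ ^ 2) with hp
  set q := t ^ 2 / 2 * (1 - u ^ 2) * (1 - isingMag β ^ 2) with hq
  set r := ∑ i, (Real.log (Real.cosh (θ + t / √n * c i)) - Real.log (Real.cosh θ)
    - (t / √n * c i) * τ - (t / √n * c i) ^ 2 / 2 * (1 - τ ^ 2)) with hr
  have hrb : |r| ≤ 16 * |t| ^ 3 / √n := by
    refine (Finset.abs_sum_le_sum_abs _ _).trans ?_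
    have : ∀ i ∈ (Finset.univ : Finset (Fin n)),
      |Real.log (Real.cosh (θ + t / √n * c i)) - Real.log (Real.cosh θ)
        - (t / √n * c i) * τ - (t / √n * c i) ^ 2 / 2 * (1 - τ ^ 2)| ≤ 16 * |t| ^ 3 / √n ^ 3 := by
      intro i _
      refine (cw_logcosh_taylor θ _).trans ?_
      rw [abs_mul, abs_div, abs_of_pos hsq]
      calc 2 * (|t| / √n * |c i|) ^ 3 ≤ 2 * (|t| / √n * 2) ^ 3 := by
            have := hcb i
            gcongr
        _ = _ := by field_simp; norm_num [mul_comm]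
    refine (Finset.sum_le_sum this).trans (le_of_eq ?_)
    simp only [Finset.sum_const, Finset.card_univ, Fintype.card_fin, nsmul_eq_mul]
    nth_rewrite 1 [← hss]
    field_simp
  have hrp : p + r = ∑ i, (Real.log (Real.cosh (θ + t / √n * c i)) - Real.log (Real.cosh θ)) := by
    rw [hr]
    simp only [Finset.sum_sub_distrib, ← Finset.sum_mul, ← Finset.mul_sum, hc1, mul_pow, ← Finset.sum_div, hc2, hp]
    rw [div_pow, hss]
    field_simp
    ring
  have e2 : ∏ i, (2 * Real.cosh (θ + t / √n * c i)) = Real.exp (p + r) * cwG n θ := by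
    have hG : cwG n θ = ∏ i : Fin n, (2 * Real.cosh θ) := by simp [cwG]
    rw [hrp, Real.exp_sum, hG, ← Finset.prod_mul_distrib]
    refine Finset.prod_congr rfl fun i _ => ?_
    rw [Real.exp_sub, Real.exp_log (Real.cosh_pos _), Real.exp_log (Real.cosh_pos _)]
    have := (Real.cosh_pos θ).ne'
    field_simp
  rw [e1, e2, ← sub_mul, abs_mul, abs_of_pos (cwG_pos n θ)]
  refine mul_le_mul_of_nonneg_right ?_ (cwG_pos n θ).le
  have hk : 0 ≤ t ^ 2 / 2 := by positivity
  have hk1 : t ^ 2 / 2 * (1 - u ^ 2) ≤ t ^ 2 / 2 := by nlinarith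
  have hk0 : 0 ≤ t ^ 2 / 2 * (1 - u ^ 2) := mul_nonneg hk (by linarith)
  have hpK : p ≤ t ^ 2 / 2 := by rw [hp]; nlinarith
  have hqK : q ≤ t ^ 2 / 2 := by rw [hq]; nlinarith [hm.1]
  have b1 : |Real.exp (p + r) - Real.exp p| ≤
      Real.exp (t ^ 2 / 2) * (Real.exp (16 * |t| ^ 3 / √n) - 1) := by
    have : Real.exp (p + r) - Real.exp p = Real.exp p * (Real.exp r - 1) := by
      rw [Real.exp_add]; ring
    rw [this, abs_mul, abs_of_pos (Real.exp_pos _)]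
    have h1 : |Real.exp r - 1| ≤ Real.exp (16 * |t| ^ 3 / √n) - 1 := by
      have ha : Real.exp r ≤ Real.exp (16 * |t| ^ 3 / √n) :=
        Real.exp_le_exp.2 ((le_abs_self r).trans hrb)
      have hb : Real.exp (-(16 * |t| ^ 3 / √n)) ≤ Real.exp r :=
        Real.exp_le_exp.2 (by have := neg_abs_le r; linarith)
      have hcc : 2 ≤ Real.exp (16 * |t| ^ 3 / √n) + Real.exp (-(16 * |t| ^ 3 / √n)) := by
        have := Real.one_le_cosh (16 * |t| ^ 3 / √n)
        rw [Real.cosh_eq] at this; linarith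
      rw [abs_le]; constructor <;> linarith
    have := Real.exp_le_exp.2 hpK
    gcongr
  have b2 : |Real.exp p - Real.exp q| ≤
      Real.exp (t ^ 2 / 2) * (t ^ 2 / 2) * |τ ^ 2 - isingMag β ^ 2| := by
    refine (cw_exp_lip hpK hqK).trans ?_
    have : p - q = t ^ 2 / 2 * (1 - u ^ 2) * -(τ ^ 2 - isingMag β ^ 2) := by rw [hp, hq]; ring
    rw [this, abs_mul, abs_neg, abs_of_nonneg hk0, mul_assoc (Real.exp _)]
    gcongr
  have := abs_sub_le (Real.exp (p + r)) (Real.exp p) (Real.exp q)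
  linarith

lemma cw_weight_pos {n : ℕ} (β : ℝ) (s : Fin n → Bool) :
    0 ≤ isingWeight β (QCW n) (pmVec s) / isingZ (Fin n) β (QCW n) :=
  div_nonneg (Real.exp_pos _).le (Finset.sum_nonneg fun _ _ => (Real.exp_pos _).le)

lemma cw_weight_sum {n : ℕ} (β : ℝ) :
    ∑ s : Fin n → Bool, isingWeight β (QCW n) (pmVec s) / isingZ (Fin n) β (QCW n) = 1 := by
  rw [← Finset.sum_div]
  exact div_self (Finset.sum_pos (fun _ _ => Real.exp_pos _) Finset.univ_nonempty).ne'

lemma cw_integral (n : ℕ) (β₁ β₂ : ℝ) (f : (Fin n → ℝ) × (Fin n → ℝ) → ℝ) :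
    ∫ p, f p ∂((isingMeasure (Fin n) β₁ (QCW n)).prod (isingMeasure (Fin n) β₂ (QCW n))) =
    ∑ s : Fin n → Bool, isingWeight β₁ (QCW n) (pmVec s) / isingZ (Fin n) β₁ (QCW n) *
      ∑ s' : Fin n → Bool, isingWeight β₂ (QCW n) (pmVec s') / isingZ (Fin n) β₂ (QCW n) *
        f (pmVec s, pmVec s') := by
  have hfin : ∀ (c : ℝ) (s : Fin n → Bool), IsFiniteMeasure (ENNReal.ofReal c • Measure.dirac (pmVec s)) := by
    intro c s
    exact Measure.smul_finite _ ENNReal.ofReal_ne_top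
  have hprod : (isingMeasure (Fin n) β₁ (QCW n)).prod (isingMeasure (Fin n) β₂ (QCW n)) =
      ∑ q : (Fin n → Bool) × (Fin n → Bool),
        (ENNReal.ofReal (isingWeight β₁ (QCW n) (pmVec q.1) / isingZ (Fin n) β₁ (QCW n)) *
          ENNReal.ofReal (isingWeight β₂ (QCW n) (pmVec q.2) / isingZ (Fin n) β₂ (QCW n))) •
          Measure.dirac (pmVec q.1, pmVec q.2) := by
    unfold isingMeasure
    rw [← Measure.sum_fintype, ← Measure.sum_fintype, ← Measure.sum_fintype, Measure.prod_sum]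
    congr 1
    funext q
    rw [Measure.prod_smul_left, Measure.prod_smul_right, Measure.dirac_prod_dirac, smul_smul]
  rw [hprod, integral_finsetSum_measure]
  · rw [Fintype.sum_prod_type]
    refine Finset.sum_congr rfl fun s _ => ?_
    rw [Finset.mul_sum]
    refine Finset.sum_congr rfl fun s' _ => ?_
    rw [integral_smul_measure, integral_dirac, ENNReal.toReal_mul,
      ENNReal.toReal_ofReal (cw_weight_pos _ _), ENNReal.toReal_ofReal (cw_weight_pos _ _), smul_eq_mul, mul_assoc]
  · intro q _
    refine Integrable.smul_measure ?_ (ENNReal.mul_ne_top ENNReal.ofReal_ne_top ENNReal.ofReal_ne_top)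
    exact integrable_dirac (by simp)

/-- **(Curie–Weiss, convergence of the moment generating function of `√n Tₙ`).**
If `X ~ P_{β₁,Q^{CW}}` and `Y ~ P_{β₂,Q^{CW}}` are independent, then for every `t ∈ ℝ`,
`E[exp(t √n Tₙ)] → exp(t² (1-m(β₁)²)(1-m(β₂)²) / 2)`. -/
theorem curieWeiss_mgf_convergence (β₁ β₂ : ℝ) (hβ₁ : 0 ≤ β₁) (hβ₂ : 0 ≤ β₂) (t : ℝ) :
    Tendsto
      (fun n => ∫ p : (Fin n → ℝ) × (Fin n → ℝ),
          Real.exp (t * (Real.sqrt n * sampleCov p.1 p.2))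
          ∂((isingMeasure (Fin n) β₁ (QCW n)).prod (isingMeasure (Fin n) β₂ (QCW n))))
      atTop
      (𝓝 (Real.exp (t ^ 2 * (1 - isingMag β₁ ^ 2) * (1 - isingMag β₂ ^ 2) / 2))) := by
  set K := t ^ 2 / 2 with hK
  have hK0 : 0 ≤ K := by positivity
  have hm1 := isingMag_sq_mem β₁
  have hm2 := isingMag_sq_mem β₂
  have hsqrt : Tendsto (fun n : ℕ => √(n:ℝ)) atTop atTop :=
    Real.tendsto_sqrt_atTop.comp tendsto_natCast_atTop_atTop
  have hlim : Tendsto (fun n : ℕ =>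
      (Real.exp K * (Real.exp (16 * |t| ^ 3 / √n) - 1) + Real.exp K * K * cwD β₂ n)
        + Real.exp K * K * (2 / √n + cwD β₁ n)) atTop (𝓝 0) := by
    have h1 : Tendsto (fun n : ℕ => 16 * |t| ^ 3 / √(n:ℝ)) atTop (𝓝 0) := hsqrt.const_div_atTop _
    have h2 : Tendsto (fun n : ℕ => 2 / √(n:ℝ)) atTop (𝓝 0) := hsqrt.const_div_atTop _
    have h3 := (((Real.continuous_exp.tendsto 0).comp h1).sub_const 1).const_mul (Real.exp K)
    have h4 := (cwD_tendsto hβ₂).const_mul (Real.exp K * K)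
    have h5 := (h2.add (cwD_tendsto hβ₁)).const_mul (Real.exp K * K)
    simpa using (h3.add h4).add h5
  rw [tendsto_iff_dist_tendsto_zero]
  refine squeeze_zero' (Eventually.of_forall fun _ => dist_nonneg) ?_ hlim
  filter_upwards [eventually_ge_atTop 1] with n hn
  rw [Real.dist_eq, cw_integral]
  simp only
  set P : (Fin n → Bool) → ℝ :=
    fun s => isingWeight β₁ (QCW n) (pmVec s) / isingZ (Fin n) β₁ (QCW n) with hP
  have hP0 : ∀ s, 0 ≤ P s := cw_weight_pos β₁
  have hP1 : ∑ s, P s = 1 := cw_weight_sum β₁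
  have hX : ∑ s, P s * |sampleMean (pmVec s) ^ 2 - isingMag β₁ ^ 2| ≤ 2 / √n + cwD β₁ n :=
    cw_meanX hβ₁ hn
  set F : (Fin n → Bool) → ℝ := fun s => ∑ s' : Fin n → Bool,
    isingWeight β₂ (QCW n) (pmVec s') / isingZ (Fin n) β₂ (QCW n) *
      Real.exp (t * (√n * sampleCov (pmVec s) (pmVec s'))) with hF
  set B := Real.exp K * (Real.exp (16 * |t| ^ 3 / √n) - 1) + Real.exp K * K * cwD β₂ n with hB
  set E0 := Real.exp (t ^ 2 * (1 - isingMag β₁ ^ 2) * (1 - isingMag β₂ ^ 2) / 2) with hE0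
  change |(∑ s, P s * F s) - E0| ≤ _
  have e : (∑ s, P s * F s) - E0 = ∑ s, P s * (F s - E0) := by
    simp only [mul_sub, Finset.sum_sub_distrib, ← Finset.sum_mul, hP1, one_mul]
  have hpt : ∀ s, |F s - E0| ≤ B + Real.exp K * K * |sampleMean (pmVec s) ^ 2 - isingMag β₁ ^ 2| := by
    intro s
    have h1 := cw_meanY hβ₂ hn t s
    have hu := cw_abs_mean_le s
    set u := sampleMean (pmVec s) with hu'
    have hu2 : u ^ 2 ≤ 1 := by rw [← sq_abs]; nlinarith [abs_nonneg u]
    have hu0 := sq_nonneg u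
    have hk1 : K * (1 - isingMag β₂ ^ 2) ≤ K := by nlinarith
    have hk0 : 0 ≤ K * (1 - isingMag β₂ ^ 2) := mul_nonneg hK0 (by linarith)
    have h2 : |Real.exp (K * (1 - u ^ 2) * (1 - isingMag β₂ ^ 2)) - E0| ≤
        Real.exp K * K * |u ^ 2 - isingMag β₁ ^ 2| := by
      refine (cw_exp_lip (K := K) (by nlinarith) ?_).trans ?_
      · have : t ^ 2 * (1 - isingMag β₁ ^ 2) * (1 - isingMag β₂ ^ 2) / 2 =
          K * (1 - isingMag β₂ ^ 2) * (1 - isingMag β₁ ^ 2) := by rw [hK]; ring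
        rw [this]; nlinarith
      · have : K * (1 - u ^ 2) * (1 - isingMag β₂ ^ 2) -
            t ^ 2 * (1 - isingMag β₁ ^ 2) * (1 - isingMag β₂ ^ 2) / 2 =
            K * (1 - isingMag β₂ ^ 2) * -(u ^ 2 - isingMag β₁ ^ 2) := by rw [hK]; ring
        rw [this, abs_mul, abs_neg, abs_of_nonneg hk0, mul_assoc (Real.exp _)]
        gcongr
    have := abs_sub_le (F s) (Real.exp (K * (1 - u ^ 2) * (1 - isingMag β₂ ^ 2))) E0
    have h1' : |F s - Real.exp (K * (1 - u ^ 2) * (1 - isingMag β₂ ^ 2))| ≤ B := h1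
    linarith
  rw [e]
  calc |∑ s, P s * (F s - E0)| ≤ ∑ s, |P s * (F s - E0)| := Finset.abs_sum_le_sum_abs _ _
    _ ≤ ∑ s, (P s * B + Real.exp K * K * (P s * |sampleMean (pmVec s) ^ 2 - isingMag β₁ ^ 2|)) := by
        refine Finset.sum_le_sum fun s _ => ?_
        rw [abs_mul, abs_of_nonneg (hP0 s)]
        have := mul_le_mul_of_nonneg_left (hpt s) (hP0 s)
        linarith
    _ = B + Real.exp K * K * ∑ s, (P s * |sampleMean (pmVec s) ^ 2 - isingMag β₁ ^ 2|) := by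
        rw [Finset.sum_add_distrib, ← Finset.sum_mul, hP1, one_mul, Finset.mul_sum]
    _ ≤ _ := by gcongr

end
end

section
/- For each n, let X ~ P_{β_1,Q^{CW}} and Y ~ P_{β_2,Q^{CW}} be independent Ising random vectors on {−1,1}^n with the Curie–Weiss interaction matrix Q^{CW} = (1/n)(11ᵀ − I_n), where β_1, β_2 ≥ 0. Then √n · ρ_n converges in distribution to N(0,1), for any values of β_1, β_2 ≥ 0. -/
open MeasureTheory ProbabilityTheory Filter Topology Matrix

noncomputable section

/-- Sample correlation `ρₙ`. -/
def sampleCorr {ι : Type*} [Fintype ι] (x y : ι → ℝ) : ℝ :=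
  (∑ i, (x i - sampleMean x) * (y i - sampleMean y)) /
    (Real.sqrt (∑ i, (x i - sampleMean x) ^ 2) * Real.sqrt (∑ i, (y i - sampleMean y) ^ 2))

/-! ### Product expectations as finite sums -/

lemma sum_pi_prod {κ R : Type*} [Fintype κ] [CommSemiring R] {n : ℕ} (g : Fin n → κ → R) :
    ∑ s : Fin n → κ, ∏ i, g i (s i) = ∏ i, ∑ b, g i b := by
  classical
  rw [Finset.prod_univ_sum, Fintype.piFinset_univ]

lemma sum_pi_one {κ : Type*} [Fintype κ] {n : ℕ} (p : κ → ℝ) (hp : ∑ b, p b = 1) :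
    ∑ s : Fin n → κ, ∏ i, p (s i) = 1 := by
  rw [sum_pi_prod (fun _ => p)]; simp [hp]

lemma sum_pi_second {κ : Type*} [Fintype κ] {n : ℕ} (p ξ : κ → ℝ) (hp : ∑ b, p b = 1)
    (hξ : ∑ b, p b * ξ b = 0) :
    ∑ s : Fin n → κ, (∏ i, p (s i)) * (∑ i, ξ (s i)) ^ 2 = n * ∑ b, p b * ξ b ^ 2 := by
  classical
  have key : ∀ i j : Fin n, ∑ s : Fin n → κ, (∏ k, p (s k)) * (ξ (s i) * ξ (s j)) =
      if i = j then ∑ b, p b * ξ b ^ 2 else 0 := by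
    intro i j
    have h1 : ∀ s : Fin n → κ, (∏ k, p (s k)) * (ξ (s i) * ξ (s j)) =
        ∏ k, (p (s k) * ((if k = i then ξ (s k) else 1) * (if k = j then ξ (s k) else 1))) := by
      intro s
      rw [Finset.prod_mul_distrib, Finset.prod_mul_distrib]
      simp
    simp_rw [h1]
    rw [sum_pi_prod (fun k b => p b * ((if k = i then ξ b else 1) * (if k = j then ξ b else 1)))]
    split_ifs with hij
    · subst hij
      rw [Finset.prod_eq_single i]
      · simp [sq]
      · intro k _ hk; simp [hk, hp]
      · simp
    · apply Finset.prod_eq_zero (Finset.mem_univ i)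
      simp [hij, hξ]
  have h2 : ∀ s : Fin n → κ, (∏ i, p (s i)) * (∑ i, ξ (s i)) ^ 2 =
      ∑ i, ∑ j, (∏ k, p (s k)) * (ξ (s i) * ξ (s j)) := by
    intro s
    rw [sq, Finset.sum_mul_sum, Finset.mul_sum]
    simp_rw [Finset.mul_sum]
  simp_rw [h2]
  rw [Finset.sum_comm]
  simp_rw [Finset.sum_comm (s := (Finset.univ : Finset (Fin n → κ))), key]
  simp

lemma sum_pi_char {κ : Type*} [Fintype κ] {n : ℕ} (p ξ : κ → ℝ) (c : ℝ) :
    ∑ s : Fin n → κ, ((∏ i, p (s i) : ℝ) : ℂ) * Complex.exp (((c * ∑ i, ξ (s i) : ℝ) : ℂ) * Complex.I)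
      = (∑ b, (p b : ℂ) * Complex.exp (((c * ξ b : ℝ) : ℂ) * Complex.I)) ^ n := by
  have := sum_pi_prod (n := n) (fun _ b => (p b : ℂ) * Complex.exp (((c * ξ b : ℝ) : ℂ) * Complex.I))
  simp only [Finset.prod_const, Finset.card_univ, Fintype.card_fin] at this
  rw [← this]
  refine Finset.sum_congr rfl fun s _ => ?_
  rw [Finset.prod_mul_distrib, ← Complex.exp_sum]
  push_cast
  rw [Finset.mul_sum, Finset.sum_mul]

lemma exp_taylor (x : ℝ) (hx : |x| ≤ 1) :
    ‖Complex.exp ((x : ℂ) * Complex.I) - (1 + x * Complex.I - x ^ 2 / 2)‖ ≤ |x| ^ 3 := by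
  have h := Complex.exp_bound (x := (x : ℂ) * Complex.I) (by simpa using hx) (n := 3) (by norm_num)
  have e : ∑ m ∈ Finset.range 3, ((x : ℂ) * Complex.I) ^ m / (m.factorial : ℂ) =
      1 + x * Complex.I - x ^ 2 / 2 := by
    simp [Finset.sum_range_succ, mul_pow]; ring
  rw [e] at h
  refine h.trans ?_
  have : ‖(x : ℂ) * Complex.I‖ = |x| := by simp
  rw [this]
  have h3 : 0 ≤ |x| ^ 3 := by positivity
  norm_num [Nat.factorial]
  linarith

lemma norm_pow_sub_le (z w : ℂ) (hz : ‖z‖ ≤ 1) (hw : ‖w‖ ≤ 1) (n : ℕ) :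
    ‖z ^ n - w ^ n‖ ≤ n * ‖z - w‖ := by
  induction n with
  | zero => simp
  | succ k ih =>
    have e : z ^ (k + 1) - w ^ (k + 1) = z ^ k * (z - w) + (z ^ k - w ^ k) * w := by ring
    rw [e]
    refine (norm_add_le _ _).trans ?_
    rw [norm_mul, norm_mul, norm_pow]
    have h1 : ‖z‖ ^ k ≤ 1 := pow_le_one₀ (norm_nonneg _) hz
    have h2 : ‖z‖ ^ k * ‖z - w‖ ≤ 1 * ‖z - w‖ := by gcongr
    have h3 : ‖z ^ k - w ^ k‖ * ‖w‖ ≤ (k * ‖z - w‖) * 1 := by gcongr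
    push_cast
    linarith

lemma clt_bound {κ : Type*} [Fintype κ] (p ξ : κ → ℝ) (hp0 : ∀ b, 0 ≤ p b) (hp : ∑ b, p b = 1)
    (hξ : ∑ b, p b * ξ b = 0) (hξ2 : ∑ b, p b * ξ b ^ 2 = 1) (K : ℝ) (hK : 1 ≤ K)
    (hb : ∀ b, |ξ b| ≤ K) (θ : ℝ) (n : ℕ) (hn : 1 ≤ n) (hθ : |θ| * K ≤ √n) :
    ‖(∑ b, (p b : ℂ) * Complex.exp ((((θ / √n) * ξ b : ℝ) : ℂ) * Complex.I)) ^ n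
      - Complex.exp (-(θ : ℂ) ^ 2 / 2)‖ ≤ (|θ| * K) ^ 3 / √n + θ ^ 4 / n := by
  have hn0 : (0 : ℝ) < n := by exact_mod_cast hn
  have hs : (0 : ℝ) < √n := Real.sqrt_pos.2 hn0
  have hss : √(n : ℝ) ^ 2 = n := Real.sq_sqrt hn0.le
  set z : ℂ := ∑ b, (p b : ℂ) * Complex.exp ((((θ / √n) * ξ b : ℝ) : ℂ) * Complex.I) with hz
  set w : ℂ := Complex.exp (((-(θ ^ 2 / (2 * n)) : ℝ) : ℂ)) with hw
  have hwn : Complex.exp (-(θ : ℂ) ^ 2 / 2) = w ^ n := by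
    rw [hw, ← Complex.exp_nat_mul]
    congr 1
    push_cast
    have : (n : ℂ) ≠ 0 := by exact_mod_cast hn0.ne'
    field_simp
  have hz1 : ‖z‖ ≤ 1 := by
    rw [hz, ← hp]
    refine (norm_sum_le _ _).trans (Finset.sum_le_sum fun b _ => ?_)
    rw [norm_mul, Complex.norm_exp_ofReal_mul_I, Complex.norm_real, Real.norm_eq_abs,
      abs_of_nonneg (hp0 b), mul_one]
  have hw1 : ‖w‖ ≤ 1 := by
    rw [hw, ← Complex.ofReal_exp, Complex.norm_real, Real.norm_eq_abs, Real.abs_exp,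
      Real.exp_le_one_iff]
    have : 0 ≤ θ ^ 2 / (2 * n) := by positivity
    linarith
  have hx : ∀ b, |θ / √n * ξ b| ≤ |θ| * K / √n := by
    intro b
    rw [abs_mul, abs_div, abs_of_pos hs, div_mul_eq_mul_div]
    gcongr
    exact hb b
  have hx1 : |θ| * K / √n ≤ 1 := by rw [div_le_one hs]; exact hθ
  have hm : (1 - θ ^ 2 / (2 * n) : ℂ) = ∑ b, (p b : ℂ) * (1 + ((θ / √n * ξ b : ℝ) : ℂ) * Complex.I
      - ((θ / √n * ξ b : ℝ) : ℂ) ^ 2 / 2) := by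
    have e : ∀ b, (p b : ℂ) * (1 + ((θ / √n * ξ b : ℝ) : ℂ) * Complex.I
      - ((θ / √n * ξ b : ℝ) : ℂ) ^ 2 / 2) = ((p b : ℝ) : ℂ) +
        (((θ / √n : ℝ) : ℂ) * Complex.I) * ((p b * ξ b : ℝ) : ℂ)
        - (((θ / √n) ^ 2 / 2 : ℝ) : ℂ) * ((p b * ξ b ^ 2 : ℝ) : ℂ) := by
      intro b; push_cast; ring
    simp_rw [e]
    rw [Finset.sum_sub_distrib, Finset.sum_add_distrib, ← Finset.mul_sum, ← Finset.mul_sum,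
      ← Complex.ofReal_sum, ← Complex.ofReal_sum, ← Complex.ofReal_sum, hp, hξ, hξ2, div_pow, hss]
    push_cast
    have : (n : ℂ) ≠ 0 := by exact_mod_cast hn0.ne'
    field_simp
    simp
  have hzm : ‖z - (1 - θ ^ 2 / (2 * n))‖ ≤ (|θ| * K / √n) ^ 3 := by
    rw [hm, hz, ← Finset.sum_sub_distrib]
    calc _ ≤ ∑ b, p b * (|θ| * K / √n) ^ 3 := by
          refine (norm_sum_le _ _).trans (Finset.sum_le_sum fun b _ => ?_)
          rw [← mul_sub, norm_mul, Complex.norm_real, Real.norm_eq_abs, abs_of_nonneg (hp0 b)]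
          refine mul_le_mul_of_nonneg_left ?_ (hp0 b)
          refine (exp_taylor _ ((hx b).trans hx1)).trans ?_
          gcongr
          exact hx b
      _ = _ := by rw [← Finset.sum_mul, hp, one_mul]
  have hwm : ‖w - (1 - θ ^ 2 / (2 * n))‖ ≤ (θ ^ 2 / (2 * n)) ^ 2 := by
    have h1 : |-(θ ^ 2 / (2 * n))| ≤ 1 := by
      rw [abs_neg, abs_of_nonneg (by positivity), div_le_one (by positivity)]
      have : |θ| ≤ √n := le_trans (le_mul_of_one_le_right (abs_nonneg _) hK) hθ
      have h2 : |θ| ^ 2 ≤ √n ^ 2 := by gcongr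
      rw [sq_abs, hss] at h2
      linarith
    have h := Real.abs_exp_sub_one_sub_id_le h1
    rw [hw]
    have e : Complex.exp (((-(θ ^ 2 / (2 * n)) : ℝ) : ℂ)) - (1 - θ ^ 2 / (2 * n)) =
      ((Real.exp (-(θ ^ 2 / (2 * n))) - 1 - -(θ ^ 2 / (2 * n)) : ℝ) : ℂ) := by
      push_cast; ring
    rw [e, Complex.norm_real, Real.norm_eq_abs]
    simpa using h
  rw [hwn]
  refine (norm_pow_sub_le z w hz1 hw1 n).trans ?_
  have h4 : ‖z - w‖ ≤ (|θ| * K / √n) ^ 3 + (θ ^ 2 / (2 * n)) ^ 2 := by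
    have e : z - w = (z - (1 - θ ^ 2 / (2 * n))) - (w - (1 - θ ^ 2 / (2 * n))) := by ring
    rw [e]
    exact (norm_sub_le _ _).trans (add_le_add hzm hwm)
  calc (n : ℝ) * ‖z - w‖ ≤ n * ((|θ| * K / √n) ^ 3 + (θ ^ 2 / (2 * n)) ^ 2) := by gcongr
    _ = (|θ| * K) ^ 3 / √n + θ ^ 4 / (4 * n) := by
      rw [mul_add]
      congr 1
      · rw [div_pow]
        nth_rewrite 1 [← hss]
        field_simp
      · field_simp; ring
    _ ≤ _ := by gcongr; linarith

/-! ### Gaussian mixture representation of the Curie–Weiss measure -/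

/-- The spin `±1` of a boolean. -/
def pmB (b : Bool) : ℝ := if b then 1 else -1

/-- Tilted single-spin law. -/
def pB (u : ℝ) (b : Bool) : ℝ := Real.exp (u * pmB b) / (2 * Real.cosh u)

lemma pB_nonneg (u : ℝ) (b : Bool) : 0 ≤ pB u b := by
  have := Real.cosh_pos u
  unfold pB; positivity

lemma sum_pB (u : ℝ) : ∑ b, pB u b = 1 := by
  have := Real.cosh_pos u
  simp only [Fintype.sum_bool, pB, pmB]
  rw [← add_div, div_eq_one_iff_eq (by positivity), Real.cosh_eq]
  simp; ring

lemma sum_pB_mul (u : ℝ) : ∑ b, pB u b * pmB b = Real.tanh u := by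
  have := Real.cosh_pos u
  rw [Real.tanh_eq_sinh_div_cosh, Real.sinh_eq]
  simp only [Fintype.sum_bool, pB, pmB]
  simp; field_simp; ring

/-- The mixing parameter. -/
def uu (β : ℝ) (n : ℕ) (g : ℝ) : ℝ := √(β / n) * g

/-- Expectation under the product of tilted laws. -/
def EB {n : ℕ} (u : ℝ) (F : (Fin n → Bool) → ℂ) : ℂ :=
  ∑ s, ((∏ i, pB u (s i) : ℝ) : ℂ) * F s

/-- Expectation under the Curie–Weiss measure. -/
def ECW {n : ℕ} (β : ℝ) (F : (Fin n → Bool) → ℂ) : ℂ :=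
  ∑ s, ((isingWeight β (QCW n) (pmVec s) / isingZ (Fin n) β (QCW n) : ℝ) : ℂ) * F s

lemma quad_QCW {n : ℕ} (hn : 1 ≤ n) (s : Fin n → Bool) :
    pmVec s ⬝ᵥ (QCW n).mulVec (pmVec s) = (∑ i, pmB (s i)) ^ 2 / n - 1 := by
  have hn0 : (0 : ℝ) < n := by exact_mod_cast hn
  have h1 : ∀ i, (QCW n).mulVec (pmVec s) i = ((∑ j, pmB (s j)) - pmB (s i)) * (n : ℝ)⁻¹ := by
    intro i
    simp only [Matrix.mulVec, dotProduct, QCW]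
    have : ∀ j, (if i = j then 0 else (n : ℝ)⁻¹) * pmVec s j =
        (pmB (s j) - if i = j then pmB (s j) else 0) * (n : ℝ)⁻¹ := by
      intro j
      have : pmVec s j = pmB (s j) := rfl
      rw [this]
      split_ifs <;> ring
    simp_rw [this]
    rw [← Finset.sum_mul, Finset.sum_sub_distrib]
    simp
  simp only [dotProduct, h1]
  have h2 : ∀ i, pmVec s i * (((∑ j, pmB (s j)) - pmB (s i)) * (n : ℝ)⁻¹) =
      (pmB (s i) * (∑ j, pmB (s j)) - 1) * (n : ℝ)⁻¹ := by
    intro i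
    have h3 : pmVec s i = pmB (s i) := rfl
    have h4 : pmB (s i) * pmB (s i) = 1 := by unfold pmB; split_ifs <;> norm_num
    rw [h3]
    linear_combination (-(n : ℝ)⁻¹) * h4
  simp_rw [h2]
  rw [← Finset.sum_mul, Finset.sum_sub_distrib, ← Finset.sum_mul]
  simp
  field_simp

lemma gauss_mgf (c : ℝ) : ∫ g, Real.exp (c * g) ∂(gaussianReal 0 1) = Real.exp (c ^ 2 / 2) := by
  have h := congrFun (mgf_id_gaussianReal (μ := 0) (v := 1)) c
  simpa [mgf] using h

lemma prod_pB {n : ℕ} (u : ℝ) (s : Fin n → Bool) :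
    ∏ i, pB u (s i) = Real.exp (u * ∑ i, pmB (s i)) / (2 * Real.cosh u) ^ n := by
  simp only [pB]
  rw [Finset.prod_div_distrib, ← Real.exp_sum, Finset.mul_sum]
  simp

lemma weight_eq {n : ℕ} (hn : 1 ≤ n) (β : ℝ) (hβ : 0 ≤ β) (s : Fin n → Bool) :
    isingWeight β (QCW n) (pmVec s) = Real.exp (-β / 2) *
      ∫ g, Real.exp (uu β n g * ∑ i, pmB (s i)) ∂(gaussianReal 0 1) := by
  have e : ∀ g, uu β n g * ∑ i, pmB (s i) = (√(β / n) * ∑ i, pmB (s i)) * g := by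
    intro g; unfold uu; ring
  simp_rw [e]
  rw [gauss_mgf, ← Real.exp_add, isingWeight, quad_QCW hn, mul_pow, Real.sq_sqrt (by positivity)]
  congr 1
  have hn0 : (0 : ℝ) < n := by exact_mod_cast hn
  field_simp
  ring

lemma integrable_expS {n : ℕ} (β : ℝ) (s : Fin n → Bool) :
    Integrable (fun g => Real.exp (uu β n g * ∑ i, pmB (s i))) (gaussianReal 0 1) := by
  have e : ∀ g, uu β n g * ∑ i, pmB (s i) = (√(β / n) * ∑ i, pmB (s i)) * g := by
    intro g; unfold uu; ring
  simp_rw [e]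
  exact integrable_exp_mul_gaussianReal _

lemma sum_weight {n : ℕ} (hn : 1 ≤ n) (β : ℝ) (hβ : 0 ≤ β) (F : (Fin n → Bool) → ℂ) :
    ∑ s, ((isingWeight β (QCW n) (pmVec s) : ℝ) : ℂ) * F s = ((Real.exp (-β / 2) : ℝ) : ℂ) *
      ∫ g, (((2 * Real.cosh (uu β n g)) ^ n : ℝ) : ℂ) * EB (uu β n g) F ∂(gaussianReal 0 1) := by
  have e : ∀ g, (((2 * Real.cosh (uu β n g)) ^ n : ℝ) : ℂ) * EB (uu β n g) F =
      ∑ s, ((Real.exp (uu β n g * ∑ i, pmB (s i)) : ℝ) : ℂ) * F s := by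
    intro g
    rw [EB, Finset.mul_sum]
    refine Finset.sum_congr rfl fun s _ => ?_
    rw [prod_pB, ← mul_assoc, ← Complex.ofReal_mul]
    congr 2
    have := Real.cosh_pos (uu β n g)
    field_simp
  simp_rw [e]
  rw [integral_finsetSum _ fun s _ => ((integrable_expS β s).ofReal.mul_const _), Finset.mul_sum]
  refine Finset.sum_congr rfl fun s _ => ?_
  rw [weight_eq hn β hβ, integral_mul_const, integral_complex_ofReal]
  push_cast
  ring

lemma EB_one {n : ℕ} (u : ℝ) : EB (n := n) u (fun _ => 1) = 1 := by
  simp only [EB, mul_one]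
  rw [← Complex.ofReal_sum, sum_pi_one _ (sum_pB u)]
  simp

lemma EB_norm_le {n : ℕ} (u B : ℝ) (F : (Fin n → Bool) → ℂ) (hF : ∀ s, ‖F s‖ ≤ B) :
    ‖EB u F‖ ≤ B := by
  have hpos : ∀ s : Fin n → Bool, 0 ≤ ∏ i, pB u (s i) :=
    fun s => Finset.prod_nonneg fun i _ => pB_nonneg _ _
  calc ‖EB u F‖ ≤ ∑ s : Fin n → Bool, (∏ i, pB u (s i)) * B := by
        refine (norm_sum_le _ _).trans (Finset.sum_le_sum fun s _ => ?_)
        rw [norm_mul, Complex.norm_real, Real.norm_eq_abs, abs_of_nonneg (hpos s)]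
        exact mul_le_mul_of_nonneg_left (hF s) (hpos s)
    _ = B := by rw [← Finset.sum_mul, sum_pi_one _ (sum_pB u), one_mul]

lemma integrable_cosh {n : ℕ} (β : ℝ) :
    Integrable (fun g => (Real.cosh (uu β n g)) ^ n) (gaussianReal 0 1) := by
  have e : (fun g => (Real.cosh (uu β n g)) ^ n) =
      fun g => (1 / 2 ^ n) * ∑ s : Fin n → Bool, Real.exp (uu β n g * ∑ i, pmB (s i)) := by
    funext g
    have h := sum_pi_one (n := n) _ (sum_pB (uu β n g))
    simp_rw [prod_pB] at h
    have := Real.cosh_pos (uu β n g)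
    rw [← Finset.sum_div, div_eq_one_iff_eq (by positivity)] at h
    rw [h, mul_pow]
    field_simp
  rw [e]
  exact (integrable_finsetSum _ fun s _ => integrable_expS β s).const_mul _

/-- Mass of the mixing measure outside `[-M, M]`. -/
def cwTail (β M : ℝ) (n : ℕ) : ℝ :=
  ∫ g, Set.indicator {g | M < |uu β n g|} (fun g => (Real.cosh (uu β n g)) ^ n) g
    ∂(gaussianReal 0 1)

lemma continuous_uu (β : ℝ) (n : ℕ) : Continuous (uu β n) := by unfold uu; fun_prop

lemma measSet_uu (β M : ℝ) (n : ℕ) : MeasurableSet {g | M < |uu β n g|} :=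
  (isOpen_lt continuous_const (continuous_uu β n).abs).measurableSet

lemma isingWeight_pos {n : ℕ} (β : ℝ) (s : Fin n → Bool) :
    0 < isingWeight β (QCW n) (pmVec s) := Real.exp_pos _

lemma isingZ_pos {n : ℕ} (β : ℝ) : 0 < isingZ (Fin n) β (QCW n) :=
  Finset.sum_pos (fun s _ => isingWeight_pos β s) ⟨fun _ => true, Finset.mem_univ _⟩

lemma ECW_bound {n : ℕ} (hn : 1 ≤ n) (β : ℝ) (hβ : 0 ≤ β) (F : (Fin n → Bool) → ℂ) (M B η : ℝ)
    (hF : ∀ s, ‖F s‖ ≤ B) (hη : 0 ≤ η) (hE : ∀ u, |u| ≤ M → ‖EB u F‖ ≤ η) :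
    ‖ECW β F‖ ≤ η + B * cwTail β M n := by
  set I := ∫ g, (Real.cosh (uu β n g)) ^ n ∂(gaussianReal 0 1) with hI
  have hB : 0 ≤ B := (norm_nonneg _).trans (hF fun _ => true)
  have hI1 : 1 ≤ I := by
    have : ∫ g, (1 : ℝ) ∂(gaussianReal 0 1) ≤ I := by
      refine integral_mono (integrable_const _) (integrable_cosh β) fun g => ?_
      exact one_le_pow₀ (Real.one_le_cosh _)
    simpa using this
  have hind : Integrable (Set.indicator {g | M < |uu β n g|}
      (fun g => (Real.cosh (uu β n g)) ^ n)) (gaussianReal 0 1) :=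
    (integrable_cosh β).indicator (measSet_uu β M n)
  have htail : 0 ≤ cwTail β M n := by
    refine integral_nonneg fun g => Set.indicator_nonneg (fun g _ => ?_) g
    have := Real.cosh_pos (uu β n g)
    positivity
  have hZ : isingZ (Fin n) β (QCW n) = Real.exp (-β / 2) * (2 ^ n * I) := by
    have h := sum_weight hn β hβ (fun _ => 1)
    simp only [mul_one, EB_one] at h
    rw [integral_complex_ofReal, ← Complex.ofReal_sum, ← Complex.ofReal_mul] at h
    have h' := Complex.ofReal_injective h
    rw [isingZ, h']
    simp_rw [mul_pow]
    rw [integral_const_mul]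
  have hnum : ‖∑ s, ((isingWeight β (QCW n) (pmVec s) : ℝ) : ℂ) * F s‖ ≤
      Real.exp (-β / 2) * (2 ^ n * (η * I + B * cwTail β M n)) := by
    rw [sum_weight hn β hβ, norm_mul, Complex.norm_real, Real.norm_eq_abs, Real.abs_exp]
    gcongr
    have : 2 ^ n * (η * I + B * cwTail β M n) = ∫ g, 2 ^ n * (η * (Real.cosh (uu β n g)) ^ n +
        B * Set.indicator {g | M < |uu β n g|} (fun g => (Real.cosh (uu β n g)) ^ n) g)
          ∂(gaussianReal 0 1) := by
      rw [integral_const_mul, integral_add ((integrable_cosh β).const_mul _) (hind.const_mul _),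
        integral_const_mul, integral_const_mul]
      rfl
    rw [this]
    refine norm_integral_le_of_norm_le
      ((((integrable_cosh β).const_mul _).add (hind.const_mul _)).const_mul _) (ae_of_all _ fun g => ?_)
    have hc : 0 < Real.cosh (uu β n g) ^ n := by
      have := Real.cosh_pos (uu β n g)
      positivity
    rw [norm_mul, Complex.norm_real, Real.norm_eq_abs, mul_pow, abs_of_nonneg (by positivity), mul_assoc]
    refine mul_le_mul_of_nonneg_left ?_ (by positivity)
    by_cases hg : M < |uu β n g|
    · rw [Set.indicator_of_mem (by exact hg)]
      have := EB_norm_le (uu β n g) B F hF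
      nlinarith [mul_nonneg hη hc.le]
    · rw [Set.indicator_of_notMem (by exact hg)]
      have := hE _ (not_lt.1 hg)
      nlinarith
  have e : ECW β F = (∑ s, ((isingWeight β (QCW n) (pmVec s) : ℝ) : ℂ) * F s) /
      ((isingZ (Fin n) β (QCW n) : ℝ) : ℂ) := by
    rw [ECW, Finset.sum_div]
    refine Finset.sum_congr rfl fun s _ => ?_
    push_cast; ring
  have hZp := isingZ_pos (n := n) β
  rw [e, norm_div, Complex.norm_real, Real.norm_eq_abs, abs_of_pos hZp, div_le_iff₀ hZp, hZ]
  refine hnum.trans ?_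
  have h5 : η * I + B * cwTail β M n ≤ (η + B * cwTail β M n) * I := by
    nlinarith [mul_nonneg hB htail]
  calc _ ≤ Real.exp (-β / 2) * (2 ^ n * ((η + B * cwTail β M n) * I)) := by gcongr
    _ = _ := by ring

lemma cwTail_tendsto (β : ℝ) (hβ : 0 ≤ β) : ∃ M₀ : ℝ, ∀ M, M₀ ≤ M →
    Tendsto (cwTail β M) atTop (𝓝 0) := by
  obtain ⟨C, hC, hgauss⟩ := IsGaussian.exists_integrable_exp_sq (gaussianReal 0 1)
  refine ⟨β / C + 1, fun M hM => ?_⟩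
  have hbC : 0 ≤ β / C := by positivity
  have hM0 : 0 < M := by linarith
  have hMC : β ≤ M * C := by
    have : β / C ≤ M := by linarith
    rwa [div_le_iff₀ hC] at this
  have : (0 : ℝ) = ∫ g : ℝ, (0 : ℝ) ∂(gaussianReal 0 1) := by simp
  rw [this]
  refine tendsto_integral_of_dominated_convergence (fun g => Real.exp (C * ‖g‖ ^ 2)) ?_ hgauss ?_ ?_
  · intro n
    exact ((integrable_cosh β).indicator (measSet_uu β M n)).aestronglyMeasurable
  · intro n
    refine ae_of_all _ fun g => ?_
    have hc := Real.cosh_pos (uu β n g)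
    by_cases hg : M < |uu β n g|
    · rw [Set.indicator_of_mem (by exact hg), Real.norm_eq_abs, abs_of_nonneg (by positivity)]
      have h1 : Real.cosh (uu β n g) ≤ Real.exp |uu β n g| := by
        rw [← Real.cosh_abs, Real.cosh_eq]
        have : Real.exp (-|uu β n g|) ≤ Real.exp |uu β n g| :=
          Real.exp_le_exp.2 (by linarith [abs_nonneg (uu β n g)])
        linarith
      calc Real.cosh (uu β n g) ^ n ≤ Real.exp |uu β n g| ^ n := by gcongr
        _ = Real.exp (n * |uu β n g|) := by rw [← Real.exp_nat_mul]
        _ ≤ _ := by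
          apply Real.exp_le_exp.2
          have h2 : n * (uu β n g) ^ 2 ≤ β * g ^ 2 := by
            unfold uu
            rw [mul_pow, Real.sq_sqrt (by positivity)]
            rcases Nat.eq_zero_or_pos n with h | h
            · subst h; simp; positivity
            · have : (0 : ℝ) < n := by exact_mod_cast h
              apply le_of_eq; field_simp
          have h3 : M * |uu β n g| ≤ (uu β n g) ^ 2 := by
            rw [← sq_abs]; nlinarith [abs_nonneg (uu β n g)]
          have h4 : M * (n * |uu β n g|) ≤ M * (C * ‖g‖ ^ 2) := by
            rw [Real.norm_eq_abs, sq_abs]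
            have : (n : ℝ) * (M * |uu β n g|) ≤ n * (uu β n g) ^ 2 := by gcongr
            nlinarith [mul_le_mul_of_nonneg_right hMC (sq_nonneg g)]
          exact le_of_mul_le_mul_left h4 hM0
    · rw [Set.indicator_of_notMem (by exact hg)]
      simp; positivity
  · refine ae_of_all _ fun g => ?_
    have h : Tendsto (fun n : ℕ => |uu β n g|) atTop (𝓝 0) := by
      have h1 : Tendsto (fun n : ℕ => β / (n : ℝ)) atTop (𝓝 0) :=
        tendsto_const_div_atTop_nhds_zero_nat β
      have h2 := (((Real.continuous_sqrt.tendsto 0).comp h1).mul_const g).abs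
      simpa [uu] using h2
    refine tendsto_const_nhds.congr' ?_
    filter_upwards [h.eventually (gt_mem_nhds hM0)] with n hn
    rw [Set.indicator_of_notMem]
    simp only [Set.mem_ofPred_eq, not_lt]
    exact hn.le

/-! ### Pointwise comparison of the sample correlation with a normalized i.i.d. sum -/

lemma sqrt_mul_corr {n : ℕ} (hn : 1 ≤ n) (x y : Fin n → ℝ) (hx : ∀ i, x i ^ 2 = 1)
    (hy : ∀ i, y i ^ 2 = 1) (m₁ m₂ : ℝ) :
    √n * sampleCorr x y = ((∑ i, (x i - m₁) * (y i - m₂)) / √n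
      - √n * ((sampleMean x - m₁) * (sampleMean y - m₂))) /
      (√(1 - sampleMean x ^ 2) * √(1 - sampleMean y ^ 2)) := by
  have hn0 : (0 : ℝ) < n := by exact_mod_cast hn
  have hs : (0 : ℝ) < √n := Real.sqrt_pos.2 hn0
  have hss : √(n : ℝ) ^ 2 = n := Real.sq_sqrt hn0.le
  have sx : ∀ z : Fin n → ℝ, ∑ i, z i = n * sampleMean z := by
    intro z; unfold sampleMean; rw [Fintype.card_fin]; field_simp
  have hv : ∀ z : Fin n → ℝ, (∀ i, z i ^ 2 = 1) →
      ∑ i, (z i - sampleMean z) ^ 2 = n * (1 - sampleMean z ^ 2) := by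
    intro z hz
    have : ∀ i, (z i - sampleMean z) ^ 2 = (1 + sampleMean z ^ 2) - 2 * sampleMean z * z i := by
      intro i; rw [← hz i]; ring
    simp_rw [this]
    rw [Finset.sum_sub_distrib, ← Finset.mul_sum, sx z]
    simp
    ring
  have hc : ∀ p q : ℝ, ∑ i, (x i - p) * (y i - q) =
      ∑ i, x i * y i - q * (n * sampleMean x) - p * (n * sampleMean y) + n * (p * q) := by
    intro p q
    have : ∀ i, (x i - p) * (y i - q) = x i * y i - q * x i - p * y i + p * q := by
      intro i; ring
    simp_rw [this]
    rw [Finset.sum_add_distrib, Finset.sum_sub_distrib, Finset.sum_sub_distrib, ← Finset.mul_sum,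
      ← Finset.mul_sum, sx x, sx y]
    simp
  unfold sampleCorr
  rw [hv x hx, hv y hy, Real.sqrt_mul hn0.le, Real.sqrt_mul hn0.le, hc, hc]
  generalize √(1 - sampleMean x ^ 2) = A
  generalize √(1 - sampleMean y ^ 2) = B
  have e : √(n : ℝ) * A * (√n * B) = n * (A * B) := by linear_combination (A * B) * hss
  rw [e, ← div_div, ← mul_div_assoc]
  congr 1
  field_simp
  rw [hss]
  ring

lemma ptw_real (P q W a b r c : ℝ) (hc : 0 < c) (hc1 : c ≤ 1) (hr : 0 < r) (hP : c ≤ P)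
    (hq : c / 2 ≤ q) (hPq : |P ^ 2 - q ^ 2| ≤ 2 * |a| + 2 * |b|) :
    |(P * W - r * (a * b)) / q - W| ≤ 4 / c ^ 2 * (W ^ 2 / r + r * (a ^ 2 + b ^ 2)) := by
  have hq0 : 0 < q := by linarith
  have h1 : |P - q| ≤ 2 / c * (|a| + |b|) := by
    have e : P ^ 2 - q ^ 2 = (P - q) * (P + q) := by ring
    rw [e, abs_mul, abs_of_pos (by linarith : 0 < P + q)] at hPq
    have : |P - q| * c ≤ 2 * |a| + 2 * |b| :=
      le_trans (mul_le_mul_of_nonneg_left (by linarith) (abs_nonneg _)) hPq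
    rw [div_mul_eq_mul_div, le_div_iff₀ hc]
    linarith
  have e : (P * W - r * (a * b)) / q - W = (W * (P - q) - r * (a * b)) / q := by
    field_simp
    ring
  rw [e, abs_div, abs_of_pos hq0]
  have h2 : |W * (P - q) - r * (a * b)| ≤ 2 / c * (W ^ 2 / r + r * (a ^ 2 + b ^ 2)) := by
    have h3 : |W * (P - q) - r * (a * b)| ≤ |W| * |P - q| + r * (|a| * |b|) := by
      refine (abs_sub _ _).trans ?_
      rw [abs_mul, abs_mul, abs_mul, abs_of_pos hr]
    have h4 : |W| * |P - q| ≤ |W| * (2 / c * (|a| + |b|)) :=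
      mul_le_mul_of_nonneg_left h1 (abs_nonneg _)
    have h5 : ∀ d : ℝ, |W| * |d| ≤ (W ^ 2 / r + r * d ^ 2) / 2 := by
      intro d
      have : 0 ≤ (|W| - r * |d|) ^ 2 / r := by positivity
      have e2 : (|W| - r * |d|) ^ 2 / r = W ^ 2 / r + r * d ^ 2 - 2 * (|W| * |d|) := by
        rw [← sq_abs W, ← sq_abs d]; field_simp; ring
      linarith
    have h6 : r * (|a| * |b|) ≤ r * (a ^ 2 + b ^ 2) / 2 := by
      have : 0 ≤ r * (|a| - |b|) ^ 2 := by positivity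
      have e2 : r * (|a| - |b|) ^ 2 = r * (a ^ 2 + b ^ 2) - 2 * (r * (|a| * |b|)) := by
        rw [← sq_abs a, ← sq_abs b]; ring
      linarith
    have h2c : 1 ≤ 2 / c := by rw [le_div_iff₀ hc]; linarith
    have h7 : r * (a ^ 2 + b ^ 2) / 2 ≤ 2 / c * (r * (a ^ 2 + b ^ 2) / 2) :=
      le_mul_of_one_le_left (by positivity) h2c
    have h8 : |W| * (2 / c * (|a| + |b|)) = 2 / c * (|W| * |a| + |W| * |b|) := by ring
    have h9 : 2 / c * (|W| * |a| + |W| * |b|) ≤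
        2 / c * ((W ^ 2 / r + r * a ^ 2) / 2 + (W ^ 2 / r + r * b ^ 2) / 2) := by
      have := h5 a
      have := h5 b
      gcongr
    calc _ ≤ _ := h3
      _ ≤ 2 / c * ((W ^ 2 / r + r * a ^ 2) / 2 + (W ^ 2 / r + r * b ^ 2) / 2) +
          2 / c * (r * (a ^ 2 + b ^ 2) / 2) := by linarith
      _ = _ := by ring
  have h10 : 0 ≤ W ^ 2 / r + r * (a ^ 2 + b ^ 2) := by positivity
  rw [div_le_iff₀ hq0]
  calc _ ≤ _ := h2
    _ = 4 / c ^ 2 * (W ^ 2 / r + r * (a ^ 2 + b ^ 2)) * (c / 2) := by field_simp; ring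
    _ ≤ _ := by gcongr

lemma exp_lip (R W : ℝ) (θ : ℝ) :
    ‖Complex.exp (((θ * R : ℝ) : ℂ) * Complex.I) - Complex.exp (((θ * W : ℝ) : ℂ) * Complex.I)‖ ≤
      |θ| * |R - W| := by
  have e : Complex.exp (((θ * R : ℝ) : ℂ) * Complex.I) - Complex.exp (((θ * W : ℝ) : ℂ) * Complex.I)
      = Complex.exp (((θ * W : ℝ) : ℂ) * Complex.I) *
        (Complex.exp (Complex.I * ((θ * (R - W) : ℝ) : ℂ)) - 1) := by
    rw [mul_sub, ← Complex.exp_add, mul_one]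
    congr 2
    push_cast; ring
  rw [e, norm_mul, Complex.norm_exp_ofReal_mul_I, one_mul]
  refine Real.norm_exp_I_mul_ofReal_sub_one_le.trans ?_
  rw [Real.norm_eq_abs, abs_mul]

lemma ptw {n : ℕ} (hn : 1 ≤ n) (x y : Fin n → ℝ) (hx : ∀ i, x i ^ 2 = 1)
    (hy : ∀ i, y i ^ 2 = 1) (m₁ m₂ c : ℝ) (hc : 0 < c) (hm₁ : c ≤ 1 - m₁ ^ 2)
    (hm₂ : c ≤ 1 - m₂ ^ 2) (P W θ : ℝ) (hP : P = √(1 - m₁ ^ 2) * √(1 - m₂ ^ 2))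
    (hW : W = (√n)⁻¹ * ∑ i, (x i - m₁) * (y i - m₂) / P) :
    ‖Complex.exp (((θ * (√n * sampleCorr x y) : ℝ) : ℂ) * Complex.I) -
      Complex.exp (((θ * W : ℝ) : ℂ) * Complex.I)‖ ≤
      32 / c ^ 2 * ((sampleMean x - m₁) ^ 2 + (sampleMean y - m₂) ^ 2) +
      |θ| * (4 / c ^ 2 * (W ^ 2 / √n +
        √n * ((sampleMean x - m₁) ^ 2 + (sampleMean y - m₂) ^ 2))) := by
  have hn0 : (0 : ℝ) < n := by exact_mod_cast hn
  have hs : (0 : ℝ) < √n := Real.sqrt_pos.2 hn0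
  have hmean : ∀ z : Fin n → ℝ, (∀ i, z i ^ 2 = 1) → |sampleMean z| ≤ 1 := by
    intro z hz
    unfold sampleMean
    rw [Fintype.card_fin, abs_div, abs_of_pos hn0, div_le_one hn0]
    refine (Finset.abs_sum_le_sum_abs _ _).trans ?_
    have : ∀ i, |z i| = 1 := fun i => by rw [← sq_eq_sq₀ (abs_nonneg _) zero_le_one, sq_abs, hz i]; norm_num
    simp [this]
  have hX := hmean x hx
  have hY := hmean y hy
  have hR := sqrt_mul_corr hn x y hx hy m₁ m₂
  set X := sampleMean x
  set Y := sampleMean y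
  set a := X - m₁ with ha
  set b := Y - m₂ with hb
  have hc1 : c ≤ 1 := by nlinarith [sq_nonneg m₁]
  have hM1 : |m₁| ≤ 1 := by rw [abs_le_one_iff_mul_self_le_one]; nlinarith
  have hM2 : |m₂| ≤ 1 := by rw [abs_le_one_iff_mul_self_le_one]; nlinarith
  have hsec : 0 ≤ |θ| * (4 / c ^ 2 * (W ^ 2 / √n + √n * (a ^ 2 + b ^ 2))) := by positivity
  have hfst : 0 ≤ 32 / c ^ 2 * (a ^ 2 + b ^ 2) := by positivity
  by_cases hbad : c / 4 < |a| ∨ c / 4 < |b|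
  · have h1 : (c / 4) ^ 2 ≤ a ^ 2 + b ^ 2 := by
      rcases hbad with h | h
      · have : (c / 4) ^ 2 ≤ |a| ^ 2 := by gcongr
        rw [sq_abs] at this
        nlinarith [sq_nonneg b]
      · have : (c / 4) ^ 2 ≤ |b| ^ 2 := by gcongr
        rw [sq_abs] at this
        nlinarith [sq_nonneg a]
    have h2 : 2 ≤ 32 / c ^ 2 * (a ^ 2 + b ^ 2) := by
      calc (2 : ℝ) = 32 / c ^ 2 * (c / 4) ^ 2 := by field_simp; norm_num
        _ ≤ _ := by gcongr
    have h3 := norm_sub_le (Complex.exp (((θ * (√n * sampleCorr x y) : ℝ) : ℂ) * Complex.I))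
      (Complex.exp (((θ * W : ℝ) : ℂ) * Complex.I))
    rw [Complex.norm_exp_ofReal_mul_I, Complex.norm_exp_ofReal_mul_I] at h3
    linarith
  · push Not at hbad
    obtain ⟨h1, h2⟩ := hbad
    have hdX : |m₁ ^ 2 - X ^ 2| ≤ 2 * |a| := by
      have e : m₁ ^ 2 - X ^ 2 = -(m₁ + X) * a := by rw [ha]; ring
      rw [e, abs_mul, abs_neg]
      gcongr
      exact (abs_add_le _ _).trans (by linarith)
    have hdY : |m₂ ^ 2 - Y ^ 2| ≤ 2 * |b| := by
      have e : m₂ ^ 2 - Y ^ 2 = -(m₂ + Y) * b := by rw [hb]; ring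
      rw [e, abs_mul, abs_neg]
      gcongr
      exact (abs_add_le _ _).trans (by linarith)
    have hsX : c / 2 ≤ 1 - X ^ 2 := by have := abs_le.1 hdX; linarith
    have hsY : c / 2 ≤ 1 - Y ^ 2 := by have := abs_le.1 hdY; linarith
    have hPc : c ≤ P := by
      rw [hP, ← Real.sqrt_mul (by linarith)]
      apply Real.le_sqrt_of_sq_le
      rw [sq]; gcongr; linarith
    have hqc : c / 2 ≤ √(1 - X ^ 2) * √(1 - Y ^ 2) := by
      rw [← Real.sqrt_mul (by linarith)]
      apply Real.le_sqrt_of_sq_le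
      rw [sq]; gcongr; linarith
    have hP0 : P ≠ 0 := by linarith
    have hPW : (∑ i, (x i - m₁) * (y i - m₂)) / √n = P * W := by
      rw [hW, ← Finset.sum_div]; field_simp
    have hPq : |P ^ 2 - (√(1 - X ^ 2) * √(1 - Y ^ 2)) ^ 2| ≤ 2 * |a| + 2 * |b| := by
      rw [hP, mul_pow, mul_pow, Real.sq_sqrt (by linarith), Real.sq_sqrt (by linarith),
        Real.sq_sqrt (by linarith), Real.sq_sqrt (by linarith)]
      have e : (1 - m₁ ^ 2) * (1 - m₂ ^ 2) - (1 - X ^ 2) * (1 - Y ^ 2) =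
        -((m₁ ^ 2 - X ^ 2) * (1 - m₂ ^ 2)) - (m₂ ^ 2 - Y ^ 2) * (1 - X ^ 2) := by ring
      rw [e]
      refine (abs_sub _ _).trans ?_
      rw [abs_neg, abs_mul, abs_mul]
      have k1 : |1 - m₂ ^ 2| ≤ 1 := by rw [abs_le]; constructor <;> linarith [sq_nonneg m₂]
      have k2 : |1 - X ^ 2| ≤ 1 := by rw [abs_le]; constructor <;> linarith [sq_nonneg X]
      have k3 := mul_le_mul hdX k1 (abs_nonneg _) (by positivity)
      have k4 := mul_le_mul hdY k2 (abs_nonneg _) (by positivity)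
      linarith
    have h5 := ptw_real P _ W a b (√n) c hc hc1 hs hPc hqc hPq
    rw [hPW] at hR
    rw [← hR] at h5
    have h6 := (exp_lip (√n * sampleCorr x y) W θ).trans
      (mul_le_mul_of_nonneg_left h5 (abs_nonneg θ))
    linarith

/-! ### Uniform CLT for the tilted product laws -/

/-- Joint single-site law. -/
def pBB (u v : ℝ) (b : Bool × Bool) : ℝ := pB u b.1 * pB v b.2

lemma sum_BB (f g : Bool → ℝ) : ∑ b : Bool × Bool, f b.1 * g b.2 = (∑ b, f b) * ∑ b, g b := by
  rw [Finset.sum_mul_sum, Fintype.sum_prod_type]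

lemma EB_EB {n : ℕ} (u v : ℝ) (F : (Fin n → Bool) → (Fin n → Bool) → ℂ) :
    EB u (fun s => EB v (fun t => F s t)) = ∑ w : Fin n → Bool × Bool,
      ((∏ i, pBB u v (w i) : ℝ) : ℂ) * F (fun i => (w i).1) (fun i => (w i).2) := by
  simp only [EB, Finset.mul_sum]
  rw [← Fintype.sum_prod_type' (f := fun s t => ((∏ i, pB u (s i) : ℝ) : ℂ) *
    (((∏ i, pB v (t i) : ℝ) : ℂ) * F s t))]
  refine (Fintype.sum_equiv (Equiv.arrowProdEquivProdArrow (Fin n) (fun _ => Bool) (fun _ => Bool))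
    _ _ fun w => ?_).symm
  simp only [pBB, Finset.prod_mul_distrib, Equiv.arrowProdEquivProdArrow_apply]
  push_cast
  ring

lemma sum_pB_centered (u : ℝ) : ∑ b, pB u b * (pmB b - Real.tanh u) = 0 := by
  simp_rw [mul_sub]
  rw [Finset.sum_sub_distrib, ← Finset.sum_mul, sum_pB, sum_pB_mul]; ring

lemma sum_pB_var (u : ℝ) : ∑ b, pB u b * (pmB b - Real.tanh u) ^ 2 = 1 - Real.tanh u ^ 2 := by
  have : ∀ b, pB u b * (pmB b - Real.tanh u) ^ 2 =
      (1 + Real.tanh u ^ 2) * pB u b - 2 * Real.tanh u * (pB u b * pmB b) := by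
    intro b
    have : pmB b ^ 2 = 1 := by unfold pmB; split_ifs <;> norm_num
    linear_combination pB u b * this
  simp_rw [this]
  rw [Finset.sum_sub_distrib, ← Finset.mul_sum, ← Finset.mul_sum, sum_pB, sum_pB_mul]; ring

lemma one_sub_tanh (u M : ℝ) (h : |u| ≤ M) : (Real.cosh M ^ 2)⁻¹ ≤ 1 - Real.tanh u ^ 2 := by
  have hu := Real.cosh_pos u
  have e : 1 - Real.tanh u ^ 2 = (Real.cosh u ^ 2)⁻¹ := by
    rw [Real.tanh_eq_sinh_div_cosh, div_pow, Real.sinh_sq]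
    field_simp
    ring
  rw [e]
  have : Real.cosh u ≤ Real.cosh M := by
    rw [Real.cosh_le_cosh]
    exact h.trans (le_abs_self M)
  gcongr

/-- Error bound. -/
def etaB (c θ : ℝ) (n : ℕ) : ℝ :=
  ((|θ| * (4 / c)) ^ 3 / √n + θ ^ 4 / n) +
    (32 / c ^ 2 * (2 / n) + |θ| * (4 / c ^ 2 * (1 / √n + √n * (2 / n))))

lemma EB_EB_bound {n : ℕ} (hn : 1 ≤ n) (u v M θ c : ℝ) (hcM : c = (Real.cosh M ^ 2)⁻¹)
    (hu : |u| ≤ M) (hv : |v| ≤ M) (hθ : |θ| * (4 / c) ≤ √n) :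
    ‖EB u (fun s : Fin n → Bool => EB v (fun t =>
      Complex.exp (((θ * (√n * sampleCorr (pmVec s) (pmVec t)) : ℝ) : ℂ) * Complex.I) -
        Complex.exp (-(θ : ℂ) ^ 2 / 2)))‖ ≤ etaB c θ n := by
  have hn0 : (0 : ℝ) < n := by exact_mod_cast hn
  have hs : (0 : ℝ) < √n := Real.sqrt_pos.2 hn0
  have hss : √(n : ℝ) ^ 2 = n := Real.sq_sqrt hn0.le
  have hc : 0 < c := by
    have := Real.cosh_pos M
    rw [hcM]; positivity
  have hm₁ : c ≤ 1 - Real.tanh u ^ 2 := hcM ▸ one_sub_tanh u M hu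
  have hm₂ : c ≤ 1 - Real.tanh v ^ 2 := hcM ▸ one_sub_tanh v M hv
  have hv₁ := sum_pB_var u
  have hv₂ := sum_pB_var v
  have hc₁ := sum_pB_centered u
  have hc₂ := sum_pB_centered v
  set m₁ := Real.tanh u
  set m₂ := Real.tanh v
  have hc1 : c ≤ 1 := by nlinarith [sq_nonneg m₁]
  set P := √(1 - m₁ ^ 2) * √(1 - m₂ ^ 2) with hP
  have hPc : c ≤ P := by
    rw [hP, ← Real.sqrt_mul (by linarith)]
    apply Real.le_sqrt_of_sq_le
    rw [sq]; gcongr; linarith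
  have hP0 : 0 < P := by linarith
  have hP2 : P ^ 2 = (1 - m₁ ^ 2) * (1 - m₂ ^ 2) := by
    rw [hP, mul_pow, Real.sq_sqrt (by linarith), Real.sq_sqrt (by linarith)]
  set p := pBB u v with hp
  have hp0 : ∀ b, 0 ≤ p b := fun b => mul_nonneg (pB_nonneg _ _) (pB_nonneg _ _)
  have hp1 : ∑ b, p b = 1 := by
    simp only [hp, pBB]; rw [sum_BB, sum_pB, sum_pB, one_mul]
  set ξ : Bool × Bool → ℝ := fun b => (pmB b.1 - m₁) * (pmB b.2 - m₂) / P with hξ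
  have hξ0 : ∑ b, p b * ξ b = 0 := by
    have : ∀ b, p b * ξ b = (pB u b.1 * (pmB b.1 - m₁) / P) * (pB v b.2 * (pmB b.2 - m₂)) := by
      intro b; simp only [hp, pBB, hξ]; ring
    simp_rw [this]
    rw [sum_BB (fun b => pB u b * (pmB b - m₁) / P) (fun b => pB v b * (pmB b - m₂)), hc₂, mul_zero]
  have hξ2 : ∑ b, p b * ξ b ^ 2 = 1 := by
    have : ∀ b, p b * ξ b ^ 2 =
        (pB u b.1 * (pmB b.1 - m₁) ^ 2 / P ^ 2) * (pB v b.2 * (pmB b.2 - m₂) ^ 2) := by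
      intro b; simp only [hp, pBB, hξ]; ring
    simp_rw [this]
    rw [sum_BB (fun b => pB u b * (pmB b - m₁) ^ 2 / P ^ 2) (fun b => pB v b * (pmB b - m₂) ^ 2),
      ← Finset.sum_div, hv₁, hv₂, div_mul_eq_mul_div, ← hP2]
    field_simp
  have ha0 : ∑ b : Bool × Bool, p b * (pmB b.1 - m₁) = 0 := by
    have : ∀ b : Bool × Bool, p b * (pmB b.1 - m₁) = (pB u b.1 * (pmB b.1 - m₁)) * pB v b.2 := by
      intro b; simp only [hp, pBB]; ring
    simp_rw [this]
    rw [sum_BB (fun b => pB u b * (pmB b - m₁)), hc₁, zero_mul]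
  have hb0 : ∑ b : Bool × Bool, p b * (pmB b.2 - m₂) = 0 := by
    have : ∀ b : Bool × Bool, p b * (pmB b.2 - m₂) = pB u b.1 * (pB v b.2 * (pmB b.2 - m₂)) := by
      intro b; simp only [hp, pBB]; ring
    simp_rw [this]
    rw [sum_BB (pB u) (fun b => pB v b * (pmB b - m₂)), hc₂, mul_zero]
  have ha2 : ∑ b : Bool × Bool, p b * (pmB b.1 - m₁) ^ 2 ≤ 1 := by
    have : ∀ b : Bool × Bool,
        p b * (pmB b.1 - m₁) ^ 2 = (pB u b.1 * (pmB b.1 - m₁) ^ 2) * pB v b.2 := by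
      intro b; simp only [hp, pBB]; ring
    simp_rw [this]
    rw [sum_BB (fun b => pB u b * (pmB b - m₁) ^ 2), hv₁, sum_pB]
    nlinarith [sq_nonneg m₁]
  have hb2 : ∑ b : Bool × Bool, p b * (pmB b.2 - m₂) ^ 2 ≤ 1 := by
    have : ∀ b : Bool × Bool,
        p b * (pmB b.2 - m₂) ^ 2 = pB u b.1 * (pB v b.2 * (pmB b.2 - m₂) ^ 2) := by
      intro b; simp only [hp, pBB]; ring
    simp_rw [this]
    rw [sum_BB (pB u) (fun b => pB v b * (pmB b - m₂) ^ 2), hv₂, sum_pB]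
    nlinarith [sq_nonneg m₂]
  have hpm : ∀ b, |pmB b| = 1 := by intro b; unfold pmB; split_ifs <;> simp
  have hM1 : |m₁| ≤ 1 := by rw [abs_le_one_iff_mul_self_le_one]; nlinarith
  have hM2 : |m₂| ≤ 1 := by rw [abs_le_one_iff_mul_self_le_one]; nlinarith
  have hξb : ∀ b, |ξ b| ≤ 4 / c := by
    intro b
    simp only [hξ]
    rw [abs_div, abs_of_pos hP0, abs_mul]
    have k1 : |pmB b.1 - m₁| ≤ 2 := (abs_sub _ _).trans (by rw [hpm]; linarith)
    have k2 : |pmB b.2 - m₂| ≤ 2 := (abs_sub _ _).trans (by rw [hpm]; linarith)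
    have k3 := mul_le_mul k1 k2 (abs_nonneg _) (by norm_num)
    apply div_le_div₀ (by norm_num) (by linarith) hc hPc
  have hK : 1 ≤ 4 / c := by rw [le_div_iff₀ hc]; linarith
  have hclt := clt_bound p ξ hp0 hp1 hξ0 hξ2 (4 / c) hK hξb θ n hn hθ
  rw [← sum_pi_char (n := n)] at hclt
  rw [EB_EB, etaB]
  set G : (Fin n → Bool × Bool) → ℂ := fun w =>
    Complex.exp (((θ / √n * ∑ i, ξ (w i) : ℝ) : ℂ) * Complex.I) with hG
  set R : (Fin n → Bool × Bool) → ℂ := fun w =>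
    Complex.exp (((θ * (√n * sampleCorr (pmVec fun i => (w i).1) (pmVec fun i => (w i).2)) : ℝ) : ℂ)
      * Complex.I) with hR
  set pw : (Fin n → Bool × Bool) → ℝ := fun w => ∏ i, p (w i) with hpw
  have hpw0 : ∀ w, 0 ≤ pw w := fun w => Finset.prod_nonneg fun i _ => hp0 _
  have hpw1 : ∑ w, pw w = 1 := sum_pi_one p hp1
  have hsplit : ∑ w, (pw w : ℂ) * (R w - Complex.exp (-(θ : ℂ) ^ 2 / 2)) =
      (∑ w, (pw w : ℂ) * G w - Complex.exp (-(θ : ℂ) ^ 2 / 2)) + ∑ w, (pw w : ℂ) * (R w - G w) := by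
    simp_rw [mul_sub]
    rw [Finset.sum_sub_distrib, Finset.sum_sub_distrib, ← Finset.sum_mul, ← Complex.ofReal_sum, hpw1]
    push_cast
    ring
  change ‖∑ w, (pw w : ℂ) * (R w - Complex.exp (-(θ : ℂ) ^ 2 / 2))‖ ≤ _
  rw [hsplit]
  refine (norm_add_le _ _).trans (add_le_add hclt ?_)
  set A : (Fin n → Bool × Bool) → ℝ := fun w => ∑ i, (pmB (w i).1 - m₁) with hA
  set B : (Fin n → Bool × Bool) → ℝ := fun w => ∑ i, (pmB (w i).2 - m₂) with hB
  set S : (Fin n → Bool × Bool) → ℝ := fun w => ∑ i, ξ (w i) with hS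
  have eS : ∑ w, pw w * S w ^ 2 = n := by
    have := sum_pi_second (n := n) p ξ hp1 hξ0
    rw [hξ2, mul_one] at this
    exact this
  have eA : ∑ w, pw w * A w ^ 2 ≤ n := by
    have := sum_pi_second (n := n) p (fun b => pmB b.1 - m₁) hp1 ha0
    calc _ = _ := this
      _ ≤ (n : ℝ) * 1 := by gcongr
      _ = n := mul_one _
  have eB : ∑ w, pw w * B w ^ 2 ≤ n := by
    have := sum_pi_second (n := n) p (fun b => pmB b.2 - m₂) hp1 hb0
    calc _ = _ := this
      _ ≤ (n : ℝ) * 1 := by gcongr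
      _ = n := mul_one _
  have hsq : ∀ (s : Fin n → Bool) i, pmVec s i ^ 2 = 1 := by
    intro s i; unfold pmVec; split_ifs <;> norm_num
  have hmA : ∀ w : Fin n → Bool × Bool, sampleMean (pmVec fun i => (w i).1) - m₁ = A w / n := by
    intro w
    simp only [hA, Finset.sum_sub_distrib]
    simp only [sampleMean, Fintype.card_fin, Finset.sum_const, Finset.card_univ, nsmul_eq_mul, sub_div]
    rw [mul_div_cancel_left₀ _ hn0.ne']
    rfl
  have hmB : ∀ w : Fin n → Bool × Bool, sampleMean (pmVec fun i => (w i).2) - m₂ = B w / n := by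
    intro w
    simp only [hB, Finset.sum_sub_distrib]
    simp only [sampleMean, Fintype.card_fin, Finset.sum_const, Finset.card_univ, nsmul_eq_mul, sub_div]
    rw [mul_div_cancel_left₀ _ hn0.ne']
    rfl
  have hpt : ∀ w, ‖R w - G w‖ ≤ 32 / c ^ 2 * ((A w / n) ^ 2 + (B w / n) ^ 2) +
      |θ| * (4 / c ^ 2 * (((√n)⁻¹ * S w) ^ 2 / √n + √n * ((A w / n) ^ 2 + (B w / n) ^ 2))) := by
    intro w
    have h := ptw hn (pmVec fun i => (w i).1) (pmVec fun i => (w i).2) (hsq _) (hsq _) m₁ m₂ c hc hm₁ hm₂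
      P ((√n)⁻¹ * S w) θ hP rfl
    rw [hmA, hmB] at h
    have e : G w = Complex.exp (((θ * ((√n)⁻¹ * S w) : ℝ) : ℂ) * Complex.I) := by
      simp only [hG, hS]
      congr 3
      ring
    rw [e]
    exact h
  calc _ ≤ ∑ w, pw w * (32 / c ^ 2 * ((A w / n) ^ 2 + (B w / n) ^ 2) +
      |θ| * (4 / c ^ 2 * (((√n)⁻¹ * S w) ^ 2 / √n + √n * ((A w / n) ^ 2 + (B w / n) ^ 2)))) := by
        refine (norm_sum_le _ _).trans (Finset.sum_le_sum fun w _ => ?_)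
        rw [norm_mul, Complex.norm_real, Real.norm_eq_abs, abs_of_nonneg (hpw0 w)]
        exact mul_le_mul_of_nonneg_left (hpt w) (hpw0 w)
    _ = 32 / c ^ 2 * ((∑ w, pw w * A w ^ 2 + ∑ w, pw w * B w ^ 2) / n ^ 2) +
      |θ| * (4 / c ^ 2 * ((∑ w, pw w * S w ^ 2) / n / √n +
        √n * ((∑ w, pw w * A w ^ 2 + ∑ w, pw w * B w ^ 2) / n ^ 2))) := by
        have : ∀ w, pw w * (32 / c ^ 2 * ((A w / n) ^ 2 + (B w / n) ^ 2) +
          |θ| * (4 / c ^ 2 * (((√n)⁻¹ * S w) ^ 2 / √n + √n * ((A w / n) ^ 2 + (B w / n) ^ 2)))) =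
          (32 / c ^ 2 / n ^ 2 + |θ| * (4 / c ^ 2) * √n / n ^ 2) * (pw w * A w ^ 2) +
          (32 / c ^ 2 / n ^ 2 + |θ| * (4 / c ^ 2) * √n / n ^ 2) * (pw w * B w ^ 2) +
          (|θ| * (4 / c ^ 2) / n / √n) * (pw w * S w ^ 2) := by
          intro w
          rw [mul_pow, inv_pow, hss]
          ring
        simp_rw [this]
        rw [Finset.sum_add_distrib, Finset.sum_add_distrib, ← Finset.mul_sum, ← Finset.mul_sum,
          ← Finset.mul_sum]
        ring
    _ ≤ 32 / c ^ 2 * ((n + n) / n ^ 2) +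
      |θ| * (4 / c ^ 2 * (n / n / √n + √n * ((n + n) / n ^ 2))) := by
        rw [eS]
        gcongr
    _ = _ := by
        have e1 : ((n : ℝ) + n) / n ^ 2 = 2 / n := by field_simp; ring
        rw [e1, div_self hn0.ne']

lemma etaB_tendsto (c θ : ℝ) : Tendsto (etaB c θ) atTop (𝓝 0) := by
  have h1 : Tendsto (fun n : ℕ => (√(n : ℝ))⁻¹) atTop (𝓝 0) :=
    tendsto_inv_atTop_zero.comp (Real.tendsto_sqrt_atTop.comp tendsto_natCast_atTop_atTop)
  have h2 : Tendsto (fun n : ℕ => (n : ℝ)⁻¹) atTop (𝓝 0) := tendsto_inv_atTop_nhds_zero_nat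
  have h : Tendsto (fun n : ℕ => ((|θ| * (4 / c)) ^ 3 * (√(n : ℝ))⁻¹ + θ ^ 4 * (n : ℝ)⁻¹) +
    (32 / c ^ 2 * 2 * (n : ℝ)⁻¹ + |θ| * (4 / c ^ 2) * 3 * (√(n : ℝ))⁻¹)) atTop (𝓝 0) := by
    simpa using ((h1.const_mul ((|θ| * (4 / c)) ^ 3)).add (h2.const_mul (θ ^ 4))).add
      ((h2.const_mul (32 / c ^ 2 * 2)).add (h1.const_mul (|θ| * (4 / c ^ 2) * 3)))
  refine h.congr fun n => ?_
  unfold etaB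
  have e : √(n : ℝ) * (2 / n) = 2 * (√(n : ℝ))⁻¹ := by
    rcases Nat.eq_zero_or_pos n with h | h
    · subst h; simp
    · have hn0 : (0 : ℝ) < n := by exact_mod_cast h
      have hs : (0 : ℝ) < √n := Real.sqrt_pos.2 hn0
      have hss : √(n : ℝ) ^ 2 = n := Real.sq_sqrt hn0.le
      field_simp
      exact hss
  rw [e]
  ring

/-! ### Passage to the Curie–Weiss measures -/

lemma sum_cw {n : ℕ} (β : ℝ) :
    ∑ s, isingWeight β (QCW n) (pmVec s) / isingZ (Fin n) β (QCW n) = 1 := by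
  rw [← Finset.sum_div]
  exact div_self (isingZ_pos β).ne'

lemma ECW_norm_le {n : ℕ} (β B : ℝ) (F : (Fin n → Bool) → ℂ) (hF : ∀ s, ‖F s‖ ≤ B) :
    ‖ECW β F‖ ≤ B := by
  have hpos : ∀ s : Fin n → Bool, 0 ≤ isingWeight β (QCW n) (pmVec s) / isingZ (Fin n) β (QCW n) :=
    fun s => div_nonneg (isingWeight_pos β s).le (isingZ_pos β).le
  calc ‖ECW β F‖ ≤ ∑ s : Fin n → Bool,
        isingWeight β (QCW n) (pmVec s) / isingZ (Fin n) β (QCW n) * B := by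
        refine (norm_sum_le _ _).trans (Finset.sum_le_sum fun s _ => ?_)
        rw [norm_mul, Complex.norm_real, Real.norm_eq_abs, abs_of_nonneg (hpos s)]
        exact mul_le_mul_of_nonneg_left (hF s) (hpos s)
    _ = B := by rw [← Finset.sum_mul, sum_cw, one_mul]

lemma ECW_ECW_bound {n : ℕ} (hn : 1 ≤ n) (β₁ β₂ : ℝ) (hβ₁ : 0 ≤ β₁) (hβ₂ : 0 ≤ β₂)
    (F : (Fin n → Bool) → (Fin n → Bool) → ℂ) (M B η : ℝ) (hη : 0 ≤ η) (hF : ∀ s t, ‖F s t‖ ≤ B)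
    (hE : ∀ u v, |u| ≤ M → |v| ≤ M → ‖EB u (fun s => EB v (fun t => F s t))‖ ≤ η)
    (ht : 0 ≤ B * cwTail β₂ M n) :
    ‖ECW β₁ (fun s => ECW β₂ (fun t => F s t))‖ ≤
      η + B * cwTail β₂ M n + B * cwTail β₁ M n := by
  refine ECW_bound hn β₁ hβ₁ _ M B _ (fun s => ECW_norm_le β₂ B _ (hF s)) (by linarith) fun u hu => ?_
  have e : EB u (fun s => ECW β₂ (fun t => F s t)) = ECW β₂ (fun t => EB u (fun s => F s t)) := by
    simp only [EB, ECW, Finset.mul_sum]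
    rw [Finset.sum_comm]
    refine Finset.sum_congr rfl fun s _ => Finset.sum_congr rfl fun t _ => ?_
    ring
  rw [e]
  refine ECW_bound hn β₂ hβ₂ _ M B _ (fun t => EB_norm_le u B _ fun s => hF s t) hη fun v hv => ?_
  have e2 : EB v (fun t => EB u (fun s => F s t)) = EB u (fun s => EB v (fun t => F s t)) := by
    simp only [EB, Finset.mul_sum]
    rw [Finset.sum_comm]
    refine Finset.sum_congr rfl fun s _ => Finset.sum_congr rfl fun t _ => ?_
    ring
  rw [e2]
  exact hE u v hu hv

lemma cwTail_nonneg (β M : ℝ) (n : ℕ) : 0 ≤ cwTail β M n := by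
  refine integral_nonneg fun g => Set.indicator_nonneg (fun g _ => ?_) g
  have := Real.cosh_pos (uu β n g)
  positivity

instance isingMeasure_prob (n : ℕ) (β : ℝ) :
    IsProbabilityMeasure (isingMeasure (Fin n) β (QCW n)) := by
  constructor
  unfold isingMeasure
  rw [Measure.finsetSum_apply]
  simp only [Measure.smul_apply, measure_univ, smul_eq_mul, mul_one]
  rw [← ENNReal.ofReal_sum_of_nonneg, sum_cw, ENNReal.ofReal_one]
  exact fun s _ => div_nonneg (isingWeight_pos β s).le (isingZ_pos β).le

lemma integral_ising {n : ℕ} (β : ℝ) (f : (Fin n → ℝ) → ℂ) :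
    ∫ x, f x ∂(isingMeasure (Fin n) β (QCW n)) = ECW β (fun s => f (pmVec s)) := by
  unfold isingMeasure ECW
  rw [integral_finsetSum_measure]
  · refine Finset.sum_congr rfl fun s _ => ?_
    rw [integral_smul_measure, integral_dirac, ENNReal.toReal_ofReal
      (div_nonneg (isingWeight_pos β s).le (isingZ_pos β).le)]
    simp
  · intro s _
    refine Integrable.smul_measure ?_ ENNReal.ofReal_ne_top
    exact integrable_dirac (by simp)

lemma measurable_corr (n : ℕ) : Measurable
    (fun p : (Fin n → ℝ) × (Fin n → ℝ) => Real.sqrt n * sampleCorr p.1 p.2) := by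
  unfold sampleCorr sampleMean
  fun_prop

lemma charFun_corr (n : ℕ) (β₁ β₂ θ : ℝ) :
    charFun (Measure.map
        (fun p : (Fin n → ℝ) × (Fin n → ℝ) => Real.sqrt n * sampleCorr p.1 p.2)
        ((isingMeasure (Fin n) β₁ (QCW n)).prod (isingMeasure (Fin n) β₂ (QCW n)))) θ =
      ECW β₁ (fun s : Fin n → Bool => ECW β₂ (fun t =>
        Complex.exp (((θ * (√n * sampleCorr (pmVec s) (pmVec t)) : ℝ) : ℂ) * Complex.I))) := by
  have hm := measurable_corr n
  rw [charFun_apply_real, integral_map hm.aemeasurable (by fun_prop), integral_prod]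
  · rw [integral_ising]
    congr 1
    funext s
    rw [integral_ising]
    congr 1
    funext t
    push_cast
    rfl
  · refine Integrable.of_bound (C := 1) ?_ (ae_of_all _ fun p => ?_)
    · exact (by fun_prop : Measurable _).aestronglyMeasurable
    · rw [← Complex.ofReal_mul, Complex.norm_exp_ofReal_mul_I]

lemma charFun_corr_tendsto (β₁ β₂ : ℝ) (hβ₁ : 0 ≤ β₁) (hβ₂ : 0 ≤ β₂) (θ : ℝ) :
    Tendsto (fun n : ℕ => charFun (Measure.map
        (fun p : (Fin n → ℝ) × (Fin n → ℝ) => Real.sqrt n * sampleCorr p.1 p.2)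
        ((isingMeasure (Fin n) β₁ (QCW n)).prod (isingMeasure (Fin n) β₂ (QCW n)))) θ)
      atTop (𝓝 (Complex.exp (-(θ : ℂ) ^ 2 / 2))) := by
  obtain ⟨M₁, hM₁⟩ := cwTail_tendsto β₁ hβ₁
  obtain ⟨M₂, hM₂⟩ := cwTail_tendsto β₂ hβ₂
  set M := max M₁ M₂
  have ht₁ := hM₁ M (le_max_left _ _)
  have ht₂ := hM₂ M (le_max_right _ _)
  set c := (Real.cosh M ^ 2)⁻¹ with hc
  have hlim : Tendsto (fun n => etaB c θ n + 2 * cwTail β₂ M n + 2 * cwTail β₁ M n) atTop (𝓝 0) := by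
    simpa using ((etaB_tendsto c θ).add (ht₂.const_mul 2)).add (ht₁.const_mul 2)
  rw [tendsto_iff_norm_sub_tendsto_zero]
  have hev : ∀ᶠ n : ℕ in atTop, |θ| * (4 / c) ≤ √(n : ℝ) :=
    (Real.tendsto_sqrt_atTop.comp tendsto_natCast_atTop_atTop).eventually_ge_atTop _
  refine squeeze_zero' (Eventually.of_forall fun n => norm_nonneg _) ?_ hlim
  filter_upwards [hev, eventually_ge_atTop 1] with n hn1 hn
  rw [charFun_corr]
  have e : ECW β₁ (fun s : Fin n → Bool => ECW β₂ (fun t =>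
        Complex.exp (((θ * (√n * sampleCorr (pmVec s) (pmVec t)) : ℝ) : ℂ) * Complex.I)))
        - Complex.exp (-(θ : ℂ) ^ 2 / 2) =
      ECW β₁ (fun s : Fin n → Bool => ECW β₂ (fun t =>
        Complex.exp (((θ * (√n * sampleCorr (pmVec s) (pmVec t)) : ℝ) : ℂ) * Complex.I)
        - Complex.exp (-(θ : ℂ) ^ 2 / 2))) := by
    simp only [ECW, mul_sub, Finset.sum_sub_distrib]
    simp only [← Finset.sum_mul, ← Complex.ofReal_sum, sum_cw, Complex.ofReal_one, one_mul]
  rw [e]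
  have hc0 : 0 < c := by
    have := Real.cosh_pos M
    rw [hc]; positivity
  refine ECW_ECW_bound hn β₁ β₂ hβ₁ hβ₂ _ M 2 _ ?_ ?_
    (fun u v hu hv => EB_EB_bound hn u v M θ c hc hu hv hn1) ?_
  · unfold etaB; positivity
  · intro s t
    refine (norm_sub_le _ _).trans ?_
    rw [Complex.norm_exp_ofReal_mul_I]
    have : ‖Complex.exp (-(θ : ℂ) ^ 2 / 2)‖ ≤ 1 := by
      have e3 : (-(θ : ℂ) ^ 2 / 2) = ((-(θ ^ 2 / 2) : ℝ) : ℂ) := by push_cast; ring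
      rw [e3, ← Complex.ofReal_exp, Complex.norm_real, Real.norm_eq_abs, Real.abs_exp,
        Real.exp_le_one_iff]
      have := sq_nonneg θ
      linarith
    linarith
  · have := cwTail_nonneg β₂ M n
    linarith

/-- **Corollary 1 (Curie–Weiss, sample correlation).** If `X ~ P_{β₁,Q^{CW}}` and
`Y ~ P_{β₂,Q^{CW}}` are independent, then `√n ρₙ →d N(0,1)` for any `β₁, β₂ ≥ 0`. -/
theorem curieWeiss_sampleCorr_clt (β₁ β₂ : ℝ) (hβ₁ : 0 ≤ β₁) (hβ₂ : 0 ≤ β₂) :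
    TendstoInDistribution
      (fun n => Measure.map
        (fun p : (Fin n → ℝ) × (Fin n → ℝ) => Real.sqrt n * sampleCorr p.1 p.2)
        ((isingMeasure (Fin n) β₁ (QCW n)).prod (isingMeasure (Fin n) β₂ (QCW n))))
      (gaussianReal 0 1) := by
  have hprob : ∀ n : ℕ, IsProbabilityMeasure (Measure.map
        (fun p : (Fin n → ℝ) × (Fin n → ℝ) => Real.sqrt n * sampleCorr p.1 p.2)
        ((isingMeasure (Fin n) β₁ (QCW n)).prod (isingMeasure (Fin n) β₂ (QCW n)))) :=
    fun n => Measure.isProbabilityMeasure_map (measurable_corr n).aemeasurable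
  intro f
  let μs : ℕ → ProbabilityMeasure ℝ := fun n => ⟨_, hprob n⟩
  let ν : ProbabilityMeasure ℝ := ⟨gaussianReal 0 1, inferInstance⟩
  have h : Tendsto μs atTop (𝓝 ν) := by
    refine ProbabilityMeasure.tendsto_iff_tendsto_charFun.2 fun θ => ?_
    have h1 := charFun_corr_tendsto β₁ β₂ hβ₁ hβ₂ θ
    have h2 : charFun (gaussianReal 0 1) θ = Complex.exp (-(θ : ℂ) ^ 2 / 2) := by
      rw [charFun_gaussianReal]
      congr 1
      push_cast
      ring
    rw [← h2] at h1
    exact h1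
  exact ProbabilityMeasure.tendsto_iff_forall_integral_tendsto.1 h f

end
end
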